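/- Let α ∈ (0,π), γ ∈ (0,π/2], B = (sin γ·cos(α/2), sin γ·sin(α/2), cos γ), and τ ∈ ℝ. Then the bottom of the essential spectrum of the Neumann realization on the sector, given by Persson's characterization s_ess(B;α,τ) = sup_{R>0} Σ(B;α,τ,R), satisfies s_ess(B;α,τ) = inf_{ξ∈ℝ} ( μ₁(ξ·cos γ + τ·sin γ) + (ξ·sin γ − τ·cos γ)² ). -/

import Mathlib

open Real MeasureTheory Set Filter

noncomputable section

namespace MagWedge

/-- The infinite sector `S_α := {(x₁,x₂) : |x₂| ≤ x₁·tan(α/2)}`. -/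
def sector (α : ℝ) : Set (ℝ × ℝ) :=
  {x | |x.2| ≤ x.1 * Real.tan (α / 2)}

/-- The infinite wedge `W_α := S_α × ℝ` (coordinates `(x₁, x₂, x₃)`). -/
def wedge (α : ℝ) : Set (ℝ × ℝ × ℝ) :=
  {x | |x.2.1| ≤ x.1 * Real.tan (α / 2)}

/-- The upper half-plane `Hp^up := {x₂ < x₁·tan(α/2)}`. -/
def hpUp (α : ℝ) : Set (ℝ × ℝ) :=
  {x | x.2 < x.1 * Real.tan (α / 2)}

/-- The lower half-plane `Hp^low := {x₂ > −x₁·tan(α/2)}`. -/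
def hpLow (α : ℝ) : Set (ℝ × ℝ) :=
  {x | -(x.1 * Real.tan (α / 2)) < x.2}

/-- The magnetic/electric energy of `u` on a planar domain `Ω`, for magnetic field
`(b₁,b₂,b₃)` (gauge `A̲ = (−x₂ b₃, 0)`) and Fourier parameter `τ`. -/
def energy2D (Ω : Set (ℝ × ℝ)) (b1 b2 b3 τ : ℝ) (u : ℝ × ℝ → ℂ) : ℝ :=
  ∫ x in Ω,
    ‖(-Complex.I) * fderiv ℝ u x (1, 0) + ((x.2 * b3 : ℝ) : ℂ) * u x‖ ^ 2
      + ‖fderiv ℝ u x (0, 1)‖ ^ 2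
      + (x.1 * b2 - x.2 * b1 - τ) ^ 2 * ‖u x‖ ^ 2

/-- The squared `L²`-norm of `u` on a planar domain `Ω`. -/
def norm2D (Ω : Set (ℝ × ℝ)) (u : ℝ × ℝ → ℂ) : ℝ := ∫ x in Ω, ‖u x‖ ^ 2

/-- The bottom of the spectrum of the Neumann realization of
`(−i∇−A̲)² + (x₁b₂−x₂b₁−τ)²` on `Ω`, via the Rayleigh quotient. -/
def specInf2D (Ω : Set (ℝ × ℝ)) (b1 b2 b3 τ : ℝ) : ℝ :=
  sInf { r : ℝ | ∃ u : ℝ × ℝ → ℂ, ContDiff ℝ (⊤ : ℕ∞) u ∧ HasCompactSupport u ∧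
    0 < norm2D Ω u ∧ r = energy2D Ω b1 b2 b3 τ u / norm2D Ω u }

/-- The band function `s(B;α,τ)` on the sector `S_α`. -/
def bandFn (α b1 b2 b3 τ : ℝ) : ℝ := specInf2D (sector α) b1 b2 b3 τ

/-- `Σ(B;α,τ,R)` : the Rayleigh quotient infimum over functions supported outside the
(closed Euclidean) ball of radius `R` centered at the origin. -/
def SigmaR (α b1 b2 b3 τ R : ℝ) : ℝ :=
  sInf { r : ℝ | ∃ u : ℝ × ℝ → ℂ, ContDiff ℝ (⊤ : ℕ∞) u ∧ HasCompactSupport u ∧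
    (tsupport u ⊆ {x : ℝ × ℝ | R ^ 2 < x.1 ^ 2 + x.2 ^ 2}) ∧
    0 < norm2D (sector α) u ∧
    r = energy2D (sector α) b1 b2 b3 τ u / norm2D (sector α) u }

/-- The bottom of the essential spectrum via Persson's characterization:
`s_ess(B;α,τ) = sup_{R>0} Σ(B;α,τ,R)`. -/
def sEss (α b1 b2 b3 τ : ℝ) : ℝ :=
  sSup { r : ℝ | ∃ R > (0 : ℝ), r = SigmaR α b1 b2 b3 τ R }

/-- The 3D magnetic energy on a domain `Ω ⊆ ℝ³` for the constant field `(b₁,b₂,b₃)`,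
in the gauge `A = (−x₂b₃, 0, x₂b₁ − x₁b₂)`. -/
def energy3D (Ω : Set (ℝ × ℝ × ℝ)) (b1 b2 b3 : ℝ) (u : ℝ × ℝ × ℝ → ℂ) : ℝ :=
  ∫ x in Ω,
    ‖(-Complex.I) * fderiv ℝ u x (1, 0, 0) + ((x.2.1 * b3 : ℝ) : ℂ) * u x‖ ^ 2
      + ‖fderiv ℝ u x (0, 1, 0)‖ ^ 2
      + ‖(-Complex.I) * fderiv ℝ u x (0, 0, 1) - ((x.2.1 * b1 : ℝ) : ℂ) * u x
          + ((x.1 * b2 : ℝ) : ℂ) * u x‖ ^ 2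

/-- The squared `L²`-norm of `u` on a domain `Ω ⊆ ℝ³`. -/
def norm3D (Ω : Set (ℝ × ℝ × ℝ)) (u : ℝ × ℝ × ℝ → ℂ) : ℝ := ∫ x in Ω, ‖u x‖ ^ 2

/-- `λ(B;W_α)` : the bottom of the spectrum of the Neumann magnetic Laplacian on the
wedge `W_α` with constant magnetic field `B = (b₁,b₂,b₃)`. -/
def lambdaWedge (α b1 b2 b3 : ℝ) : ℝ :=
  sInf { r : ℝ | ∃ u : ℝ × ℝ × ℝ → ℂ, ContDiff ℝ (⊤ : ℕ∞) u ∧ HasCompactSupport u ∧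
    0 < norm3D (wedge α) u ∧ r = energy3D (wedge α) b1 b2 b3 u / norm3D (wedge α) u }

/-- The de Gennes function `μ₁(ξ)`: bottom of the spectrum of the Neumann realization of
`−d²/dt² + (t−ξ)²` on the half-line. -/
def deGennes (ξ : ℝ) : ℝ :=
  sInf { r : ℝ | ∃ u : ℝ → ℂ, ContDiff ℝ (⊤ : ℕ∞) u ∧ HasCompactSupport u ∧
    (0 < ∫ t in Ioi (0 : ℝ), ‖u t‖ ^ 2) ∧
    r = (∫ t in Ioi (0 : ℝ), ‖deriv u t‖ ^ 2 + (t - ξ) ^ 2 * ‖u t‖ ^ 2) /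
        (∫ t in Ioi (0 : ℝ), ‖u t‖ ^ 2) }

/-- `Θ₀ := inf_ξ μ₁(ξ)`. -/
def Theta0 : ℝ := ⨅ ξ : ℝ, deGennes ξ

/-- The half-space `{(s,t,z) : t > 0}` in ℝ³. -/
def halfSpace3 : Set (ℝ × ℝ × ℝ) := {x | 0 < x.2.1}

/-- `σ(θ)` : the bottom of the spectrum of the Neumann magnetic Laplacian on the half-space
with a unit magnetic field making angle `θ` with the boundary. -/
def sigmaHS (θ : ℝ) : ℝ :=
  sInf { r : ℝ | ∃ u : ℝ × ℝ × ℝ → ℂ, ContDiff ℝ (⊤ : ℕ∞) u ∧ HasCompactSupport u ∧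
    (0 < ∫ x in halfSpace3, ‖u x‖ ^ 2) ∧
    r = (∫ x in halfSpace3,
          ‖fderiv ℝ u x (1, 0, 0)‖ ^ 2 + ‖fderiv ℝ u x (0, 1, 0)‖ ^ 2
            + ‖(-Complex.I) * fderiv ℝ u x (0, 0, 1)
                - ((x.2.1 * Real.cos θ : ℝ) : ℂ) * u x
                + ((x.1 * Real.sin θ : ℝ) : ℂ) * u x‖ ^ 2) /
        (∫ x in halfSpace3, ‖u x‖ ^ 2) }

/-- `μ(α)` : the bottom of the spectrum of the magnetic Neumann Laplacian on the sector
`S_α` with unit constant (scalar) magnetic field. -/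
def muSector (α : ℝ) : ℝ :=
  sInf { r : ℝ | ∃ u : ℝ × ℝ → ℂ, ContDiff ℝ (⊤ : ℕ∞) u ∧ HasCompactSupport u ∧
    0 < norm2D (sector α) u ∧
    r = (∫ x in sector α,
          ‖(-Complex.I) * fderiv ℝ u x (1, 0) + (x.2 : ℂ) * u x‖ ^ 2
            + ‖fderiv ℝ u x (0, 1)‖ ^ 2) / norm2D (sector α) u }

end MagWedge

/-!
In coordinates `(s, t)` tangential and normal to one face of the sector, and after a gauge
transformation, the operator is `(-i∂ₛ - t cos γ)² - ∂ₜ² + (t sin γ - τ)²`. Its electric potential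
depends only on `t` and tends to infinity with `t`, so a function of low energy supported far from
the vertex concentrates near that face, where the sector is indistinguishable from the half-plane
`t > 0`. On the half-plane a Fourier transform in `s` gives the fibres
`-∂ₜ² + (ξ - t cos γ)² + (t sin γ - τ)²`, whose potential is
`(t - (ξ cos γ + τ sin γ))² + (ξ sin γ - τ cos γ)²`; this is the right-hand side of the formula.

The lower bound localizes with an IMS partition of unity depending only on `t`; the upper bound uses
`exp(iξs) ψ(s) g(t)` with `g` almost minimizing for a fibre and `ψ` slowly varying and far away.
-/

namespace MagWedge

open scoped FourierTransform ContDiff Topology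

section Preliminaries

variable {X E : Type*} [TopologicalSpace X] [NormedAddCommGroup E] {f : X → E}

lemma hasCompactSupport_norm_sq (hc : HasCompactSupport f) :
    HasCompactSupport fun x => ‖f x‖ ^ 2 :=
  hc.comp_left (g := fun y : E => ‖y‖ ^ 2) (by simp)

lemma integrable_norm_sq [MeasurableSpace X] [OpensMeasurableSpace X] {μ : Measure X}
    [IsFiniteMeasureOnCompacts μ] (hf : Continuous f) (hc : HasCompactSupport f) :
    Integrable (fun x => ‖f x‖ ^ 2) μ :=
  (hf.norm.pow 2).integrable_of_hasCompactSupport (hasCompactSupport_norm_sq hc)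

lemma contDiff_ofReal_comp [NormedSpace ℝ E] {n : WithTop ℕ∞} {φ : E → ℝ} (hφ : ContDiff ℝ n φ) :
    ContDiff ℝ n fun x => (φ x : ℂ) :=
  Complex.ofRealCLM.contDiff.comp hφ

end Preliminaries

/-! ### Gauge transformations and magnetic derivatives -/

section GaugeTransform

variable {X : Type*}

/-- The gauge transformation `u ↦ exp(iφ) u`. -/
def gaugeTransform (φ : X → ℝ) (u : X → ℂ) (x : X) : ℂ :=
  Complex.exp (φ x * Complex.I) * u x

lemma norm_gaugeTransform (φ : X → ℝ) (u : X → ℂ) (x : X) : ‖gaugeTransform φ u x‖ = ‖u x‖ := by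
  rw [gaugeTransform, norm_mul, Complex.norm_exp_ofReal_mul_I, one_mul]

lemma tsupport_gaugeTransform [TopologicalSpace X] (φ : X → ℝ) (u : X → ℂ) :
    tsupport (gaugeTransform φ u) = tsupport u := by
  have : Function.support (gaugeTransform φ u) = Function.support u := by
    ext x
    simp [gaugeTransform]
  rw [tsupport, this, tsupport]

end GaugeTransform

section MagneticDerivative

variable {E F : Type*} [NormedAddCommGroup E] [NormedSpace ℝ E] [NormedAddCommGroup F]
  [NormedSpace ℝ F] {A : E → E →L[ℝ] ℝ} {u v : E → ℂ} {x : E}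

/-- The magnetic derivative `(-i∇ - A) u`, as a 1-form; the vector potential `A` is itself
encoded as a 1-form. -/
def magneticDeriv (A : E → E →L[ℝ] ℝ) (u : E → ℂ) (x : E) : E →L[ℝ] ℂ :=
  -Complex.I • fderiv ℝ u x - (A x).smulRight (u x)

lemma magneticDeriv_apply (A : E → E →L[ℝ] ℝ) (u : E → ℂ) (x e : E) :
    magneticDeriv A u x e = -Complex.I * fderiv ℝ u x e - A x e * u x := by
  simp [magneticDeriv]

lemma magneticDeriv_congr (h : u =ᶠ[𝓝 x] v) : magneticDeriv A u x = magneticDeriv A v x := by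
  rw [magneticDeriv, magneticDeriv, h.fderiv_eq, h.eq_of_nhds]

lemma magneticDeriv_comp (L : F →L[ℝ] E) {y : F} (hu : DifferentiableAt ℝ u (L y)) :
    magneticDeriv (fun y => (A (L y)).comp L) (u ∘ L) y = (magneticDeriv A u (L y)).comp L := by
  ext e
  simp [magneticDeriv, fderiv_comp y hu L.differentiableAt]

lemma hasFDerivAt_ofReal_comp {φ : E → ℝ} (hφ : DifferentiableAt ℝ φ x) :
    HasFDerivAt (fun y => (φ y : ℂ)) (Complex.ofRealCLM.comp (fderiv ℝ φ x)) x :=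
  Complex.ofRealCLM.hasFDerivAt.comp x hφ.hasFDerivAt

lemma magneticDeriv_ofReal_mul {χ : E → ℝ} (hχ : DifferentiableAt ℝ χ x)
    (hu : DifferentiableAt ℝ u x) (e : E) :
    magneticDeriv A (fun y => χ y * u y) x e =
      χ x * magneticDeriv A u x e - Complex.I * (fderiv ℝ χ x e * u x) := by
  have hd : HasFDerivAt (fun y => (χ y : ℂ) * u y) _ x :=
    (hasFDerivAt_ofReal_comp hχ).mul hu.hasFDerivAt
  simp only [magneticDeriv_apply, hd.fderiv, add_apply, smul_apply,
    ContinuousLinearMap.comp_apply, Complex.ofRealCLM_apply, smul_eq_mul]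
  ring

lemma contDiff_gaugeTransform {n : WithTop ℕ∞} {φ : E → ℝ} (hφ : ContDiff ℝ n φ)
    (hu : ContDiff ℝ n u) : ContDiff ℝ n (gaugeTransform φ u) :=
  ((contDiff_ofReal_comp hφ).mul contDiff_const).cexp.mul hu

lemma magneticDeriv_gaugeTransform {φ : E → ℝ} (hφ : DifferentiableAt ℝ φ x)
    (hu : DifferentiableAt ℝ u x) :
    magneticDeriv (A + fderiv ℝ φ) (gaugeTransform φ u) x =
      Complex.exp (φ x * Complex.I) • magneticDeriv A u x := by
  have hd : HasFDerivAt (gaugeTransform φ u) _ x :=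
    ((hasFDerivAt_ofReal_comp hφ).mul_const Complex.I).cexp.mul hu.hasFDerivAt
  ext e
  simp only [magneticDeriv_apply, hd.fderiv, gaugeTransform, Pi.add_apply, add_apply, smul_apply,
    ContinuousLinearMap.comp_apply, Complex.ofRealCLM_apply, smul_eq_mul, Complex.ofReal_add]
  linear_combination
    (-Complex.exp (φ x * Complex.I) * u x * fderiv ℝ φ x e) * Complex.I_mul_I

end MagneticDerivative

/-! ### Energy densities and Rayleigh quotients in the plane -/

section EnergyDensity

variable {A : ℝ × ℝ → ℝ × ℝ →L[ℝ] ℝ} {V : ℝ × ℝ → ℝ} {u v : ℝ × ℝ → ℂ} {x : ℝ × ℝ}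

/-- The density `|(-i∇ - A) u|² + V |u|²` of the quadratic form of the Schrödinger operator with
magnetic potential `A` and electric potential `V`. -/
def energyDensity (A : ℝ × ℝ → ℝ × ℝ →L[ℝ] ℝ) (V : ℝ × ℝ → ℝ) (u : ℝ × ℝ → ℂ) (x : ℝ × ℝ) : ℝ :=
  ‖magneticDeriv A u x (1, 0)‖ ^ 2 + ‖magneticDeriv A u x (0, 1)‖ ^ 2 + V x * ‖u x‖ ^ 2

lemma energyDensity_congr (h : u =ᶠ[𝓝 x] v) : energyDensity A V u x = energyDensity A V v x := by
  rw [energyDensity, energyDensity, magneticDeriv_congr h, h.eq_of_nhds]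

lemma energyDensity_eq_zero (h : u =ᶠ[𝓝 x] 0) : energyDensity A V u x = 0 := by
  rw [energyDensity_congr h]
  simp [energyDensity, magneticDeriv_apply, Pi.zero_def]

lemma energyDensity_eq_zero_of_notMem_tsupport (h : x ∉ tsupport u) : energyDensity A V u x = 0 :=
  energyDensity_eq_zero (notMem_tsupport_iff_eventuallyEq.1 h)

lemma mul_norm_sq_le_energyDensity : V x * ‖u x‖ ^ 2 ≤ energyDensity A V u x :=
  le_add_of_nonneg_left (by positivity)

lemma energyDensity_nonneg (hV : 0 ≤ V x) : 0 ≤ energyDensity A V u x :=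
  (mul_nonneg hV (sq_nonneg _)).trans mul_norm_sq_le_energyDensity

lemma continuous_energyDensity (hA : Continuous A) (hV : Continuous V) (hu : ContDiff ℝ 1 u) :
    Continuous (energyDensity A V u) := by
  have := hu.continuous_fderiv one_ne_zero
  have := hu.continuous
  unfold energyDensity
  simp only [magneticDeriv_apply]
  fun_prop

lemma hasCompactSupport_energyDensity (hc : HasCompactSupport u) :
    HasCompactSupport (energyDensity A V u) :=
  .intro hc.isCompact fun _ => energyDensity_eq_zero_of_notMem_tsupport

lemma integrable_energyDensity {μ : Measure (ℝ × ℝ)} [IsFiniteMeasureOnCompacts μ]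
    (hA : Continuous A) (hV : Continuous V) (hu : ContDiff ℝ 1 u) (hc : HasCompactSupport u) :
    Integrable (energyDensity A V u) μ :=
  (continuous_energyDensity hA hV hu).integrable_of_hasCompactSupport
    (hasCompactSupport_energyDensity hc)

lemma energyDensity_gaugeTransform {φ : ℝ × ℝ → ℝ} (hφ : DifferentiableAt ℝ φ x)
    (hu : DifferentiableAt ℝ u x) :
    energyDensity (A + fderiv ℝ φ) V (gaugeTransform φ u) x = energyDensity A V u x := by
  simp only [energyDensity, magneticDeriv_gaugeTransform hφ hu, norm_gaugeTransform,
    smul_apply, smul_eq_mul, norm_mul, Complex.norm_exp_ofReal_mul_I, one_mul]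

lemma norm_sq_add_norm_sq_reflection (θ : ℝ) (z w : ℂ) :
    ‖Real.cos θ * z + Real.sin θ * w‖ ^ 2 + ‖Real.sin θ * z - Real.cos θ * w‖ ^ 2 =
      ‖z‖ ^ 2 + ‖w‖ ^ 2 := by
  simp only [← Complex.normSq_eq_norm_sq, Complex.normSq_apply, Complex.add_re, Complex.add_im,
    Complex.sub_re, Complex.sub_im, Complex.re_ofReal_mul, Complex.im_ofReal_mul]
  linear_combination (z.re ^ 2 + z.im ^ 2 + w.re ^ 2 + w.im ^ 2) * Real.sin_sq_add_cos_sq θ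

/-- The IMS localization formula for the partition of unity `cos² θ + sin² θ = 1`. -/
lemma energyDensity_cos_add_energyDensity_sin {θ : ℝ × ℝ → ℝ} (hθ : DifferentiableAt ℝ θ x)
    (hu : DifferentiableAt ℝ u x) :
    energyDensity A V (fun y => Real.cos (θ y) * u y) x +
        energyDensity A V (fun y => Real.sin (θ y) * u y) x =
      energyDensity A V u x +
        (fderiv ℝ θ x (1, 0) ^ 2 + fderiv ℝ θ x (0, 1) ^ 2) * ‖u x‖ ^ 2 := by
  have hd (e : ℝ × ℝ) :
      ‖magneticDeriv A (fun y => Real.cos (θ y) * u y) x e‖ ^ 2 +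
          ‖magneticDeriv A (fun y => Real.sin (θ y) * u y) x e‖ ^ 2 =
        ‖magneticDeriv A u x e‖ ^ 2 + fderiv ℝ θ x e ^ 2 * ‖u x‖ ^ 2 := by
    have h := norm_sq_add_norm_sq_reflection (θ x) (magneticDeriv A u x e)
      (Complex.I * (fderiv ℝ θ x e * u x))
    rw [norm_mul Complex.I, norm_mul, Complex.norm_I, one_mul, Complex.norm_real, mul_pow,
      Real.norm_eq_abs, sq_abs] at h
    rw [magneticDeriv_ofReal_mul hθ.cos hu, magneticDeriv_ofReal_mul hθ.sin hu, ← h,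
      (hθ.hasFDerivAt.cos).fderiv, (hθ.hasFDerivAt.sin).fderiv]
    simp only [smul_apply, smul_eq_mul, Complex.ofReal_mul, Complex.ofReal_neg]
    congr 3 <;> ring
  have hn : ‖Real.cos (θ x) * u x‖ ^ 2 + ‖Real.sin (θ x) * u x‖ ^ 2 = ‖u x‖ ^ 2 := by
    simpa using norm_sq_add_norm_sq_reflection (θ x) (u x) 0
  unfold energyDensity
  linear_combination hd (1, 0) + hd (0, 1) + V x * hn

end EnergyDensity

section RayleighQuotients

variable {A : ℝ × ℝ → ℝ × ℝ →L[ℝ] ℝ} {V : ℝ × ℝ → ℝ} {Ω K : Set (ℝ × ℝ)}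

/-- The Rayleigh quotients over `Ω` of the functions supported in `K`. -/
def rayleighQuotients (A : ℝ × ℝ → ℝ × ℝ →L[ℝ] ℝ) (V : ℝ × ℝ → ℝ) (Ω K : Set (ℝ × ℝ)) : Set ℝ :=
  {r | ∃ u : ℝ × ℝ → ℂ, ContDiff ℝ ∞ u ∧ HasCompactSupport u ∧ tsupport u ⊆ K ∧
    0 < ∫ x in Ω, ‖u x‖ ^ 2 ∧ r = (∫ x in Ω, energyDensity A V u x) / ∫ x in Ω, ‖u x‖ ^ 2}

lemma nonneg_of_mem_rayleighQuotients (hV : ∀ x, 0 ≤ V x) {r : ℝ}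
    (hr : r ∈ rayleighQuotients A V Ω K) : 0 ≤ r := by
  obtain ⟨u, -, -, -, hu, rfl⟩ := hr
  exact div_nonneg (integral_nonneg fun x => energyDensity_nonneg (hV x)) hu.le

lemma rayleighQuotients_subset_gauge {φ : ℝ × ℝ → ℝ} (hφ : ContDiff ℝ ∞ φ) :
    rayleighQuotients A V Ω K ⊆ rayleighQuotients (A + fderiv ℝ φ) V Ω K := by
  rintro _ ⟨u, hu, hc, hK, hpos, rfl⟩
  have ht := tsupport_gaugeTransform φ u
  refine ⟨gaugeTransform φ u, contDiff_gaugeTransform hφ hu, hc.mul_left, ht ▸ hK, ?_, ?_⟩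
  · simpa only [norm_gaugeTransform] using hpos
  · have hE (x : ℝ × ℝ) := energyDensity_gaugeTransform (A := A) (V := V) (x := x)
      (hφ.differentiable (by simp) x) (hu.differentiable (by simp) x)
    simp only [hE, norm_gaugeTransform]

lemma rayleighQuotients_gauge {φ : ℝ × ℝ → ℝ} (hφ : ContDiff ℝ ∞ φ) :
    rayleighQuotients (A + fderiv ℝ φ) V Ω K = rayleighQuotients A V Ω K := by
  refine Subset.antisymm ?_ (rayleighQuotients_subset_gauge hφ)
  have hA : A + fderiv ℝ φ + fderiv ℝ (fun x => -φ x) = A := by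
    ext1 x
    simp [fderiv_fun_neg]
  simpa only [hA] using rayleighQuotients_subset_gauge (A := A + fderiv ℝ φ) hφ.neg

end RayleighQuotients

/-! ### Coordinates adapted to a face of the sector -/

section FaceCoordinates

/-- The linear isometry of the plane whose components are the tangential and normal coordinates
with respect to the upper edge of the sector of half-opening `a`, the normal pointing inwards. It
reverses the orientation. -/
def faceReflection (a : ℝ) : (ℝ × ℝ) ≃L[ℝ] ℝ × ℝ :=
  let L : ℝ × ℝ →L[ℝ] ℝ × ℝ :=
    (Real.cos a • ContinuousLinearMap.fst ℝ ℝ ℝ + Real.sin a • ContinuousLinearMap.snd ℝ ℝ ℝ).prod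
      (Real.sin a • ContinuousLinearMap.fst ℝ ℝ ℝ - Real.cos a • ContinuousLinearMap.snd ℝ ℝ ℝ)
  have hL (p : ℝ × ℝ) : L (L p) = p := by
    have h := Real.sin_sq_add_cos_sq a
    ext <;> simp only [L, ContinuousLinearMap.prod_apply, add_apply, sub_apply, smul_apply,
      ContinuousLinearMap.coe_fst', ContinuousLinearMap.coe_snd', smul_eq_mul]
    · linear_combination p.1 * h
    · linear_combination p.2 * h
  .equivOfInverse L L hL hL

lemma faceReflection_apply (a : ℝ) (p : ℝ × ℝ) :
    faceReflection a p =
      (Real.cos a * p.1 + Real.sin a * p.2, Real.sin a * p.1 - Real.cos a * p.2) :=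
  rfl

lemma faceReflection_involutive (a : ℝ) : Function.Involutive (faceReflection a) :=
  (faceReflection a).left_inv

lemma faceReflection_sq_add_sq (a : ℝ) (p : ℝ × ℝ) :
    (faceReflection a p).1 ^ 2 + (faceReflection a p).2 ^ 2 = p.1 ^ 2 + p.2 ^ 2 := by
  simp only [faceReflection_apply]
  linear_combination (p.1 ^ 2 + p.2 ^ 2) * Real.sin_sq_add_cos_sq a

lemma measurePreserving_faceReflection (a : ℝ) : MeasurePreserving (faceReflection a) := by
  set L : ℝ × ℝ →ₗ[ℝ] ℝ × ℝ := (faceReflection a : ℝ × ℝ →L[ℝ] ℝ × ℝ).toLinearMap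
  have hdet : LinearMap.det L * LinearMap.det L = 1 := by
    rw [← LinearMap.det_comp, show L ∘ₗ L = LinearMap.id from
      LinearMap.ext (faceReflection_involutive a), LinearMap.det_id]
  have habs : |(LinearMap.det L)⁻¹| = 1 := by
    rcases mul_self_eq_one_iff.1 hdet with h | h <;> simp [h]
  refine ⟨(faceReflection a).continuous.measurable, ?_⟩
  have h := Measure.map_linearMap_addHaar_eq_smul_addHaar (volume : Measure (ℝ × ℝ))
    (left_ne_zero_of_mul_eq_one hdet)
  rwa [habs, ENNReal.ofReal_one, one_smul] at h

lemma setIntegral_preimage_faceReflection (a : ℝ) (Ω : Set (ℝ × ℝ)) (f : ℝ × ℝ → ℝ) :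
    ∫ x in faceReflection a ⁻¹' Ω, f (faceReflection a x) = ∫ p in Ω, f p :=
  (measurePreserving_faceReflection a).setIntegral_preimage_emb
    (faceReflection a).toHomeomorph.measurableEmbedding f Ω

variable {A : ℝ × ℝ → ℝ × ℝ →L[ℝ] ℝ} {V : ℝ × ℝ → ℝ} {Ω K : Set (ℝ × ℝ)}

/-- The pullback of a 1-form by the face reflection. -/
def reflectedPotential (a : ℝ) (A : ℝ × ℝ → ℝ × ℝ →L[ℝ] ℝ) (x : ℝ × ℝ) : ℝ × ℝ →L[ℝ] ℝ :=
  (A (faceReflection a x)).comp (faceReflection a : ℝ × ℝ →L[ℝ] ℝ × ℝ)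

lemma reflectedPotential_involutive (a : ℝ) : Function.Involutive (reflectedPotential a) := by
  intro A
  ext1 x
  refine ContinuousLinearMap.ext fun e => ?_
  simp [reflectedPotential, faceReflection_involutive a _]

lemma energyDensity_comp_faceReflection (a : ℝ) {u : ℝ × ℝ → ℂ} {x : ℝ × ℝ}
    (hu : DifferentiableAt ℝ u (faceReflection a x)) :
    energyDensity (reflectedPotential a A) (V ∘ faceReflection a) (u ∘ faceReflection a) x =
      energyDensity A V u (faceReflection a x) := by
  set D := magneticDeriv A u (faceReflection a x)
  have hD (e : ℝ × ℝ) : magneticDeriv (reflectedPotential a A) (u ∘ faceReflection a) x e =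
      (faceReflection a e).1 * D (1, 0) + (faceReflection a e).2 * D (0, 1) := by
    have hbasis (p : ℝ × ℝ) : D p = p.1 * D (1, 0) + p.2 * D (0, 1) := by
      calc D p = D (p.1 • (1, 0) + p.2 • (0, 1)) := by simp
        _ = p.1 * D (1, 0) + p.2 * D (0, 1) := by simp only [map_add, map_smul, Complex.real_smul]
    rw [← hbasis]
    exact congrArg (· e) (magneticDeriv_comp (A := A) (faceReflection a : ℝ × ℝ →L[ℝ] ℝ × ℝ) hu)
  have h := norm_sq_add_norm_sq_reflection a (D (1, 0)) (D (0, 1))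
  simp only [energyDensity, hD, Function.comp_apply]
  simpa [faceReflection_apply, sub_eq_add_neg, D] using h

lemma rayleighQuotients_subset_reflect (a : ℝ) :
    rayleighQuotients A V Ω K ⊆
      rayleighQuotients (reflectedPotential a A) (V ∘ faceReflection a)
        (faceReflection a ⁻¹' Ω) (faceReflection a ⁻¹' K) := by
  rintro _ ⟨u, hu, hc, hK, hpos, rfl⟩
  have hnorm : ∫ x in faceReflection a ⁻¹' Ω, ‖(u ∘ faceReflection a) x‖ ^ 2 =
      ∫ p in Ω, ‖u p‖ ^ 2 :=
    setIntegral_preimage_faceReflection a Ω fun p => ‖u p‖ ^ 2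
  refine ⟨u ∘ faceReflection a, hu.comp (faceReflection a).contDiff,
    hc.comp_homeomorph (faceReflection a).toHomeomorph, ?_, hnorm ▸ hpos, ?_⟩
  · exact (tsupport_comp_eq_preimage u (faceReflection a).toHomeomorph).trans_subset
      (preimage_mono hK)
  · have hE (x : ℝ × ℝ) := energyDensity_comp_faceReflection (A := A) (V := V) a (x := x)
      (hu.differentiable (by simp) _)
    rw [hnorm, ← setIntegral_preimage_faceReflection a Ω]
    simp only [hE]

lemma rayleighQuotients_reflect (a : ℝ) :
    rayleighQuotients (reflectedPotential a A) (V ∘ faceReflection a)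
        (faceReflection a ⁻¹' Ω) (faceReflection a ⁻¹' K) = rayleighQuotients A V Ω K := by
  refine Subset.antisymm ?_ (rayleighQuotients_subset_reflect a)
  have h := faceReflection_involutive a
  simpa only [reflectedPotential_involutive a A, Function.comp_assoc, h.comp_self,
    Function.comp_id, ← preimage_comp, preimage_id] using
    rayleighQuotients_subset_reflect (A := reflectedPotential a A) (V := V ∘ faceReflection a)
      (Ω := faceReflection a ⁻¹' Ω) (K := faceReflection a ⁻¹' K) a

end FaceCoordinates

section Sector

/-- The complement of the closed disc of radius `|R|`. -/
def discCompl (R : ℝ) : Set (ℝ × ℝ) := {p | R ^ 2 < p.1 ^ 2 + p.2 ^ 2}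

/-- The sector of opening `α` in the coordinates adapted to one of its faces. -/
def faceSector (α : ℝ) : Set (ℝ × ℝ) := {p | 0 ≤ p.2 ∧ 0 ≤ p.1 * Real.sin α - p.2 * Real.cos α}

/-- The magnetic potential of the tangential gauge in face coordinates, for a field making the
angle `γ` with the edge of the wedge. -/
def faceVectorPotential (γ : ℝ) (p : ℝ × ℝ) : ℝ × ℝ →L[ℝ] ℝ :=
  (Real.cos γ * p.2) • ContinuousLinearMap.fst ℝ ℝ ℝ

/-- The electric potential `(x₁b₂ - x₂b₁ - τ)²` in face coordinates, for a field tangent to the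
face. -/
def faceElectricPotential (γ τ : ℝ) (p : ℝ × ℝ) : ℝ := (p.2 * Real.sin γ - τ) ^ 2

lemma faceVectorPotential_apply (γ : ℝ) (p e : ℝ × ℝ) :
    faceVectorPotential γ p e = Real.cos γ * p.2 * e.1 := by
  simp [faceVectorPotential]

lemma continuous_faceVectorPotential (γ : ℝ) : Continuous (faceVectorPotential γ) := by
  unfold faceVectorPotential
  fun_prop

lemma continuous_faceElectricPotential (γ τ : ℝ) : Continuous (faceElectricPotential γ τ) := by
  unfold faceElectricPotential
  fun_prop

lemma faceElectricPotential_nonneg (γ τ : ℝ) (p : ℝ × ℝ) : 0 ≤ faceElectricPotential γ τ p :=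
  sq_nonneg _

lemma measurableSet_faceSector (α : ℝ) : MeasurableSet (faceSector α) := by
  have h : Measurable fun p : ℝ × ℝ => p.1 * Real.sin α - p.2 * Real.cos α := by fun_prop
  exact (measurableSet_le measurable_const measurable_snd).inter
    (measurableSet_le measurable_const h)

lemma sector_eq_preimage_faceSector {α : ℝ} (hα : α ∈ Ioo (-π) π) :
    sector α = faceReflection (α / 2) ⁻¹' faceSector α := by
  ext ⟨x, y⟩
  have hc : 0 < Real.cos (α / 2) :=
    Real.cos_pos_of_mem_Ioo ⟨by linarith [hα.1], by linarith [hα.2]⟩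
  have hsin : Real.sin α = 2 * Real.sin (α / 2) * Real.cos (α / 2) := by
    rw [← Real.sin_two_mul, mul_div_cancel₀ α two_ne_zero]
  have hcos : Real.cos α = 2 * Real.cos (α / 2) ^ 2 - 1 := by
    rw [← Real.cos_two_mul, mul_div_cancel₀ α two_ne_zero]
  have hlower : (Real.cos (α / 2) * x + Real.sin (α / 2) * y) * Real.sin α -
      (Real.sin (α / 2) * x - Real.cos (α / 2) * y) * Real.cos α =
        Real.sin (α / 2) * x + Real.cos (α / 2) * y := by
    rw [hsin, hcos]
    linear_combination (2 * Real.cos (α / 2) * y) * Real.sin_sq_add_cos_sq (α / 2)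
  simp only [sector, faceSector, mem_ofPred_eq, mem_preimage, faceReflection_apply, hlower,
    Real.tan_eq_sin_div_cos, ← mul_div_assoc, le_div_iff₀ hc]
  rw [← abs_of_pos hc, ← abs_mul, abs_of_pos hc, abs_le]
  constructor <;> rintro ⟨h₁, h₂⟩ <;> constructor <;> linarith

lemma SigmaR_eq_sInf_rayleighQuotients (α b₁ b₂ b₃ τ R : ℝ) :
    SigmaR α b₁ b₂ b₃ τ R =
      sInf (rayleighQuotients (fun x => (-(x.2 * b₃)) • ContinuousLinearMap.fst ℝ ℝ ℝ)
        (fun x => (x.1 * b₂ - x.2 * b₁ - τ) ^ 2) (sector α) (discCompl R)) := by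
  have hE (u : ℝ × ℝ → ℂ) : energy2D (sector α) b₁ b₂ b₃ τ u =
      ∫ x in sector α, energyDensity (fun x => (-(x.2 * b₃)) • ContinuousLinearMap.fst ℝ ℝ ℝ)
        (fun x => (x.1 * b₂ - x.2 * b₁ - τ) ^ 2) u x := by
    simp [energy2D, energyDensity, magneticDeriv_apply]
  simp only [SigmaR, hE]
  rfl

/-- The phase of the gauge transformation between the gauge `(-x₂b₃, 0)` of the sector and the
tangential gauge of its upper face. -/
def facePhase (a b₃ : ℝ) (x : ℝ × ℝ) : ℝ :=
  b₃ * (Real.sin a * Real.cos a * ((x.2 ^ 2 - x.1 ^ 2) / 2) - Real.sin a ^ 2 * (x.1 * x.2))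

lemma contDiff_facePhase (a b₃ : ℝ) : ContDiff ℝ ∞ (facePhase a b₃) := by
  unfold facePhase
  fun_prop

lemma reflectedPotential_add_fderiv_facePhase (a γ : ℝ) :
    reflectedPotential a (faceVectorPotential γ) + fderiv ℝ (facePhase a (Real.cos γ)) =
      fun x => (-(x.2 * Real.cos γ)) • ContinuousLinearMap.fst ℝ ℝ ℝ := by
  ext1 x
  have h₁ : HasFDerivAt (fun y : ℝ × ℝ => y.1) (.fst ℝ ℝ ℝ) x := hasFDerivAt_fst
  have h₂ : HasFDerivAt (fun y : ℝ × ℝ => y.2) (.snd ℝ ℝ ℝ) x := hasFDerivAt_snd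
  have hφ : HasFDerivAt (facePhase a (Real.cos γ)) _ x :=
    (((((h₂.pow 2).sub (h₁.pow 2)).mul_const 2⁻¹).const_mul (Real.sin a * Real.cos a)).sub
      ((h₁.mul h₂).const_mul (Real.sin a ^ 2))).const_mul (Real.cos γ)
  refine ContinuousLinearMap.ext fun e => ?_
  simp only [Pi.add_apply, add_apply, hφ.fderiv, reflectedPotential,
    ContinuousLinearMap.comp_apply, ContinuousLinearEquiv.coe_coe, faceVectorPotential_apply,
    faceReflection_apply, sub_apply, smul_apply, ContinuousLinearMap.coe_fst',
    ContinuousLinearMap.coe_snd', smul_eq_mul, pow_one, Nat.add_one_sub_one]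
  linear_combination (-Real.cos γ * x.2 * e.1) * Real.sin_sq_add_cos_sq a

lemma SigmaR_eq_sInf_face {α : ℝ} (hα : α ∈ Ioo (-π) π) (γ τ R : ℝ) :
    SigmaR α (Real.sin γ * Real.cos (α / 2)) (Real.sin γ * Real.sin (α / 2)) (Real.cos γ) τ R =
      sInf (rayleighQuotients (faceVectorPotential γ) (faceElectricPotential γ τ) (faceSector α)
        (discCompl R)) := by
  have hV : (fun x : ℝ × ℝ => (x.1 * (Real.sin γ * Real.sin (α / 2)) -
      x.2 * (Real.sin γ * Real.cos (α / 2)) - τ) ^ 2) =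
        faceElectricPotential γ τ ∘ faceReflection (α / 2) := by
    ext x
    simp only [faceElectricPotential, Function.comp_apply, faceReflection_apply]
    ring
  have hK : faceReflection (α / 2) ⁻¹' discCompl R = discCompl R := by
    ext x
    simp only [discCompl, mem_preimage, mem_ofPred_eq, faceReflection_sq_add_sq]
  rw [SigmaR_eq_sInf_rayleighQuotients, hV, sector_eq_preimage_faceSector hα, ← hK,
    ← reflectedPotential_add_fderiv_facePhase (α / 2), rayleighQuotients_gauge
    (contDiff_facePhase _ _), rayleighQuotients_reflect, hK]

end Sector

/-! ### Fibres of the half-plane operator -/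

section Fibers

variable {g : ℝ → ℂ}

lemma deGennes_mul_integral_le (ξ : ℝ) (hg : ContDiff ℝ ∞ g) (hc : HasCompactSupport g) :
    deGennes ξ * ∫ t in Ioi (0 : ℝ), ‖g t‖ ^ 2 ≤
      ∫ t in Ioi (0 : ℝ), ‖deriv g t‖ ^ 2 + (t - ξ) ^ 2 * ‖g t‖ ^ 2 := by
  have hnonneg (f : ℝ → ℂ) :
      0 ≤ ∫ t in Ioi (0 : ℝ), ‖deriv f t‖ ^ 2 + (t - ξ) ^ 2 * ‖f t‖ ^ 2 :=
    integral_nonneg fun t => by positivity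
  have hnorm : 0 ≤ ∫ t in Ioi (0 : ℝ), ‖g t‖ ^ 2 := integral_nonneg fun t => by positivity
  rcases hnorm.eq_or_lt with h | h
  · simpa only [← h, mul_zero] using hnonneg g
  · rw [← le_div_iff₀ h]
    refine csInf_le ⟨0, ?_⟩ ⟨g, hg, hc, h, rfl⟩
    rintro _ ⟨f, -, -, hf, rfl⟩
    exact div_nonneg (hnonneg f) hf.le

lemma deGennes_nonneg (ξ : ℝ) : 0 ≤ deGennes ξ := by
  refine Real.sInf_nonneg ?_
  rintro _ ⟨f, -, -, hf, rfl⟩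
  exact div_nonneg (integral_nonneg fun t => by positivity) hf.le

/-- The bottom of the spectrum of the half-plane operator that models the sector near one of its
faces, as the infimum of the band functions of its fibres. -/
def halfPlaneBottom (γ τ : ℝ) : ℝ :=
  ⨅ ξ : ℝ, (deGennes (ξ * Real.cos γ + τ * Real.sin γ) +
    (ξ * Real.sin γ - τ * Real.cos γ) ^ 2)

lemma halfPlaneBottom_le (γ τ ξ : ℝ) :
    halfPlaneBottom γ τ ≤ deGennes (ξ * Real.cos γ + τ * Real.sin γ) +
      (ξ * Real.sin γ - τ * Real.cos γ) ^ 2 := by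
  refine ciInf_le ⟨0, ?_⟩ ξ
  rintro _ ⟨η, rfl⟩
  exact add_nonneg (deGennes_nonneg _) (sq_nonneg _)

/-- The energy density of the fibre, at tangential frequency `ξ`, of the half-plane operator. -/
def fiberDensity (γ τ ξ : ℝ) (g : ℝ → ℂ) (t : ℝ) : ℝ :=
  ‖deriv g t‖ ^ 2 + ((ξ - t * Real.cos γ) ^ 2 + (t * Real.sin γ - τ) ^ 2) * ‖g t‖ ^ 2

lemma integrable_deriv_sq_add_mul_sq {μ : Measure ℝ} [IsFiniteMeasureOnCompacts μ] {W : ℝ → ℝ}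
    (hW : Continuous W) (hg : ContDiff ℝ 1 g) (hc : HasCompactSupport g) :
    Integrable (fun t => ‖deriv g t‖ ^ 2 + W t * ‖g t‖ ^ 2) μ :=
  (integrable_norm_sq (hg.continuous_deriv le_rfl) hc.deriv).add
    ((hW.mul (hg.continuous.norm.pow 2)).integrable_of_hasCompactSupport
      (hasCompactSupport_norm_sq hc).mul_left)

/-- The sum of the two squares is the squared distance from `(ξ, τ)` to `t • (cos γ, sin γ)`. -/
lemma fiberDensity_eq (γ τ ξ : ℝ) (g : ℝ → ℂ) (t : ℝ) :
    fiberDensity γ τ ξ g t =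
      ‖deriv g t‖ ^ 2 + (t - (ξ * Real.cos γ + τ * Real.sin γ)) ^ 2 * ‖g t‖ ^ 2 +
        (ξ * Real.sin γ - τ * Real.cos γ) ^ 2 * ‖g t‖ ^ 2 := by
  unfold fiberDensity
  linear_combination (t ^ 2 - ξ ^ 2 - τ ^ 2) * ‖g t‖ ^ 2 * Real.sin_sq_add_cos_sq γ

lemma integral_fiberDensity (γ τ ξ : ℝ) (hg : ContDiff ℝ 1 g) (hc : HasCompactSupport g) :
    ∫ t in Ioi (0 : ℝ), fiberDensity γ τ ξ g t =
      (∫ t in Ioi (0 : ℝ),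
        ‖deriv g t‖ ^ 2 + (t - (ξ * Real.cos γ + τ * Real.sin γ)) ^ 2 * ‖g t‖ ^ 2) +
      (ξ * Real.sin γ - τ * Real.cos γ) ^ 2 * ∫ t in Ioi (0 : ℝ), ‖g t‖ ^ 2 := by
  simp only [fiberDensity_eq]
  rw [integral_add (integrable_deriv_sq_add_mul_sq (by fun_prop) hg hc)
    ((integrable_norm_sq hg.continuous hc).const_mul _), integral_const_mul]

lemma halfPlaneBottom_mul_integral_le (γ τ ξ : ℝ) (hg : ContDiff ℝ ∞ g)
    (hc : HasCompactSupport g) :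
    halfPlaneBottom γ τ * ∫ t in Ioi (0 : ℝ), ‖g t‖ ^ 2 ≤
      ∫ t in Ioi (0 : ℝ), fiberDensity γ τ ξ g t := by
  have hnorm : 0 ≤ ∫ t in Ioi (0 : ℝ), ‖g t‖ ^ 2 := integral_nonneg fun t => by positivity
  rw [integral_fiberDensity γ τ ξ (hg.of_le (by simp)) hc]
  linarith [mul_le_mul_of_nonneg_right (halfPlaneBottom_le γ τ ξ) hnorm,
    deGennes_mul_integral_le (ξ * Real.cos γ + τ * Real.sin γ) hg hc]

end Fibers

/-! ### The partial Fourier transform -/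

section PartialFourier

variable {f g : ℝ × ℝ → ℂ}

lemma hasCompactSupport_slice (hc : HasCompactSupport f) (t : ℝ) :
    HasCompactSupport fun s => f (s, t) := by
  refine .intro (hc.isCompact.image continuous_fst) fun s hs => ?_
  by_contra h
  exact hs ⟨(s, t), subset_tsupport f h, rfl⟩

lemma hasDerivAt_slice_fst (hf : Differentiable ℝ f) (s t : ℝ) :
    HasDerivAt (fun s => f (s, t)) (fderiv ℝ f (s, t) (1, 0)) s :=
  (hf (s, t)).hasFDerivAt.comp_hasDerivAt s ((hasDerivAt_id s).prodMk (hasDerivAt_const s t))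

lemma hasDerivAt_slice_snd (hf : Differentiable ℝ f) (s t : ℝ) :
    HasDerivAt (fun t => f (s, t)) (fderiv ℝ f (s, t) (0, 1)) t :=
  (hf (s, t)).hasFDerivAt.comp_hasDerivAt t ((hasDerivAt_const t s).prodMk (hasDerivAt_id t))

lemma contDiff_fderiv_apply (hf : ContDiff ℝ ∞ f) (e : ℝ × ℝ) :
    ContDiff ℝ ∞ fun p => fderiv ℝ f p e :=
  (hf.fderiv_right (by simp)).clm_apply contDiff_const

/-- The Fourier transform of `f` in its first variable. -/
def partialFourier (f : ℝ × ℝ → ℂ) (k t : ℝ) : ℂ := 𝓕 (fun s => f (s, t)) k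

lemma partialFourier_eq_integral (f : ℝ × ℝ → ℂ) (k t : ℝ) :
    partialFourier f k t = ∫ s : ℝ, (Real.fourierChar (-(s * k)) : ℂ) * f (s, t) :=
  Real.fourier_real_eq _ _

lemma integrable_fourierChar_mul_slice (hf : Continuous f) (hc : HasCompactSupport f) (k t : ℝ) :
    Integrable fun s : ℝ => (Real.fourierChar (-(s * k)) : ℂ) * f (s, t) :=
  Continuous.integrable_of_hasCompactSupport (by fun_prop) (hasCompactSupport_slice hc t).mul_left

lemma partialFourier_sub (hf : Continuous f) (hfc : HasCompactSupport f) (hg : Continuous g)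
    (hgc : HasCompactSupport g) (k t : ℝ) :
    partialFourier (fun p => f p - g p) k t = partialFourier f k t - partialFourier g k t := by
  simp only [partialFourier_eq_integral, mul_sub]
  exact integral_sub (integrable_fourierChar_mul_slice hf hfc k t)
    (integrable_fourierChar_mul_slice hg hgc k t)

lemma partialFourier_mul_left (c : ℝ → ℂ) (f : ℝ × ℝ → ℂ) (k t : ℝ) :
    partialFourier (fun p => c p.2 * f p) k t = c t * partialFourier f k t := by
  simp only [partialFourier_eq_integral, mul_left_comm _ (c t), integral_const_mul]

lemma hasDerivAt_partialFourier (hf : ContDiff ℝ 1 f) (hc : HasCompactSupport f) (k t : ℝ) :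
    HasDerivAt (partialFourier f k) (partialFourier (fun p => fderiv ℝ f p (0, 1)) k t) t := by
  set f' : ℝ × ℝ → ℂ := fun p => fderiv ℝ f p (0, 1)
  have hf' : Continuous f' := (hf.continuous_fderiv one_ne_zero).clm_apply continuous_const
  have hc' : HasCompactSupport f' := hc.fderiv_apply ℝ _
  have hK : IsCompact (Prod.fst '' tsupport f') := hc'.isCompact.image continuous_fst
  obtain ⟨C, hC⟩ := hf'.bounded_above_of_compact_support hc'
  have hbound (s t : ℝ) : ‖(Real.fourierChar (-(s * k)) : ℂ) * f' (s, t)‖ ≤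
      (Prod.fst '' tsupport f').indicator (fun _ => C) s := by
    rw [norm_mul, Circle.norm_coe, one_mul]
    by_cases hs : s ∈ Prod.fst '' tsupport f'
    · simpa only [indicator_of_mem hs] using hC (s, t)
    · have h0 : f' (s, t) = 0 := image_eq_zero_of_notMem_tsupport fun h => hs ⟨_, h, rfl⟩
      simp [indicator_of_notMem hs, h0]
  rw [funext (partialFourier_eq_integral f k), partialFourier_eq_integral]
  refine (hasDerivAt_integral_of_dominated_loc_of_deriv_le univ_mem
    (.of_forall fun t => (integrable_fourierChar_mul_slice hf.continuous hc k t).1)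
    (integrable_fourierChar_mul_slice hf.continuous hc k t)
    (integrable_fourierChar_mul_slice hf' hc' k t).1 (.of_forall fun s t _ => hbound s t)
    ((integrable_indicator_iff hK.measurableSet).2 (integrableOn_const hK.measure_lt_top.ne))
    (.of_forall fun s t _ => ?_)).2
  exact (hasDerivAt_slice_snd (hf.differentiable one_ne_zero) s t).const_mul _

lemma contDiff_partialFourier (hf : ContDiff ℝ ∞ f) (hc : HasCompactSupport f) (k : ℝ) :
    ContDiff ℝ ∞ (partialFourier f k) := by
  refine contDiff_infty.2 fun n => ?_
  induction n generalizing f with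
  | zero =>
    exact contDiff_zero.2 <| continuous_iff_continuousAt.2 fun t =>
      (hasDerivAt_partialFourier (hf.of_le (by simp)) hc k t).continuousAt
  | succ n ih =>
    have hd := hasDerivAt_partialFourier (hf.of_le (by simp)) hc k
    push_cast
    refine contDiff_succ_iff_deriv.2 ⟨fun t => (hd t).differentiableAt, by simp, ?_⟩
    rw [funext fun t => (hd t).deriv]
    exact ih (contDiff_fderiv_apply hf _) (hc.fderiv_apply ℝ _)

lemma hasCompactSupport_partialFourier (hc : HasCompactSupport f) (k : ℝ) :
    HasCompactSupport (partialFourier f k) := by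
  refine .intro (hc.isCompact.image continuous_snd) fun t ht => ?_
  have h0 (s : ℝ) : f (s, t) = 0 := image_eq_zero_of_notMem_tsupport fun h => ht ⟨_, h, rfl⟩
  simp [partialFourier_eq_integral, h0]

lemma partialFourier_fderiv_fst (hf : ContDiff ℝ 1 f) (hc : HasCompactSupport f) (k t : ℝ) :
    partialFourier (fun p => fderiv ℝ f p (1, 0)) k t =
      2 * π * Complex.I * k * partialFourier f k t := by
  have hdiff := hf.differentiable one_ne_zero
  have hderiv : deriv (fun s => f (s, t)) = fun s => fderiv ℝ f (s, t) (1, 0) :=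
    funext fun s => (hasDerivAt_slice_fst hdiff s t).deriv
  have hint : Integrable fun s => f (s, t) :=
    (hf.continuous.comp (by fun_prop)).integrable_of_hasCompactSupport
      (hasCompactSupport_slice hc t)
  have hint' : Integrable (deriv fun s => f (s, t)) := by
    rw [hderiv]
    exact (((hf.continuous_fderiv one_ne_zero).clm_apply continuous_const).comp
      (by fun_prop : Continuous fun s : ℝ => (s, t))).integrable_of_hasCompactSupport
      (hasCompactSupport_slice (hc.fderiv_apply ℝ _) t)
  have h := congrFun (Real.fourier_deriv hint
    (fun s => (hasDerivAt_slice_fst hdiff s t).differentiableAt) hint') k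
  rw [hderiv] at h
  simpa only [partialFourier, smul_eq_mul] using h

lemma integrable_and_integral_norm_sq_partialFourier_slice (hf : ContDiff ℝ ∞ f)
    (hc : HasCompactSupport f) (t : ℝ) :
    Integrable (fun k => ‖partialFourier f k t‖ ^ 2) ∧
      ∫ k, ‖partialFourier f k t‖ ^ 2 = ∫ s, ‖f (s, t)‖ ^ 2 := by
  let φ := (hasCompactSupport_slice hc t).toSchwartzMap
    (hf.comp (contDiff_prodMk_left t) : ContDiff ℝ ∞ fun s => f (s, t))
  have hφ (k : ℝ) : 𝓕 φ k = partialFourier f k t := congrFun (SchwartzMap.fourier_coe φ) k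
  have hint := ((𝓕 φ).memLp 2 volume).integrable_norm_pow two_ne_zero
  have hplancherel := SchwartzMap.integral_norm_sq_fourier φ
  simp only [hφ] at hint hplancherel
  exact ⟨hint, hplancherel⟩

lemma stronglyMeasurable_partialFourier (hf : Continuous f) :
    StronglyMeasurable fun q : ℝ × ℝ => partialFourier f q.1 q.2 := by
  have h : Continuous fun z : (ℝ × ℝ) × ℝ =>
      (Real.fourierChar (-(z.2 * z.1.1)) : ℂ) * f (z.2, z.1.2) := by fun_prop
  simpa only [partialFourier_eq_integral] using
    h.stronglyMeasurable.integral_prod_right' (ν := volume)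

variable {ν : Measure ℝ} [SFinite ν] [IsFiniteMeasureOnCompacts ν]

lemma integrable_norm_sq_partialFourier (hf : ContDiff ℝ ∞ f) (hc : HasCompactSupport f) :
    Integrable (fun q : ℝ × ℝ => ‖partialFourier f q.1 q.2‖ ^ 2) (volume.prod ν) := by
  have hslice := integrable_and_integral_norm_sq_partialFourier_slice hf hc
  refine (integrable_prod_iff'
    ((stronglyMeasurable_partialFourier hf.continuous).norm.pow 2).aestronglyMeasurable).2
    ⟨.of_forall fun t => (hslice t).1, ?_⟩
  simpa only [Pi.pow_apply, norm_pow, norm_norm, (hslice _).2] using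
    (integrable_norm_sq (μ := (volume : Measure ℝ).prod ν)
      hf.continuous hc).integral_prod_right

lemma integral_norm_sq_partialFourier (hf : ContDiff ℝ ∞ f) (hc : HasCompactSupport f) :
    ∫ q : ℝ × ℝ, ‖partialFourier f q.1 q.2‖ ^ 2 ∂volume.prod ν =
      ∫ p, ‖f p‖ ^ 2 ∂volume.prod ν := by
  rw [integral_prod_symm _ (integrable_norm_sq_partialFourier hf hc),
    integral_prod_symm _ (integrable_norm_sq hf.continuous hc)]
  simp only [(integrable_and_integral_norm_sq_partialFourier_slice hf hc _).2]

end PartialFourier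

/-! ### The half-plane inequality -/

section HalfPlane

variable {w : ℝ × ℝ → ℂ}

lemma contDiff_magneticDeriv_apply {E : Type*} [NormedAddCommGroup E] [NormedSpace ℝ E]
    {A : E → E →L[ℝ] ℝ} {u : E → ℂ} (hA : ContDiff ℝ ∞ A) (hu : ContDiff ℝ ∞ u) (e : E) :
    ContDiff ℝ ∞ fun x => magneticDeriv A u x e := by
  simp only [magneticDeriv_apply]
  exact (contDiff_const.mul ((hu.fderiv_right (by simp)).clm_apply contDiff_const)).sub
    ((contDiff_ofReal_comp (hA.clm_apply contDiff_const)).mul hu)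

lemma hasCompactSupport_magneticDeriv_apply {E : Type*} [NormedAddCommGroup E] [NormedSpace ℝ E]
    {u : E → ℂ} (A : E → E →L[ℝ] ℝ) (hc : HasCompactSupport u) (e : E) :
    HasCompactSupport fun x => magneticDeriv A u x e := by
  simp only [magneticDeriv_apply]
  exact (hc.fderiv_apply ℝ e).mul_left.sub hc.mul_left

lemma integral_add_add {X : Type*} [MeasurableSpace X] {μ : Measure X} {f g h : X → ℝ}
    (hf : Integrable f μ) (hg : Integrable g μ) (hh : Integrable h μ) :
    ∫ x, f x + g x + h x ∂μ = ∫ x, f x ∂μ + ∫ x, g x ∂μ + ∫ x, h x ∂μ := by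
  rw [← integral_add hf hg]
  exact integral_add (hf.add hg) hh

lemma contDiff_faceVectorPotential (γ : ℝ) : ContDiff ℝ ∞ (faceVectorPotential γ) := by
  unfold faceVectorPotential
  fun_prop

/-- The upper half-plane measure, as a product: tangential variable first, normal variable
second. -/
abbrev halfPlaneMeasure : Measure (ℝ × ℝ) := (volume : Measure ℝ).prod (volume.restrict (Ioi 0))

lemma halfPlaneMeasure_eq_restrict :
    halfPlaneMeasure = (volume : Measure (ℝ × ℝ)).restrict {p | 0 ≤ p.2} := by
  have h : {p : ℝ × ℝ | 0 ≤ p.2} = univ ×ˢ Ici (0 : ℝ) := by ext; simp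
  rw [h, Measure.volume_eq_prod, ← Measure.prod_restrict, Measure.restrict_univ,
    halfPlaneMeasure, restrict_Ioi_eq_restrict_Ici]

lemma fiberDensity_partialFourier (γ τ : ℝ) (hw : ContDiff ℝ ∞ w) (hc : HasCompactSupport w)
    (k t : ℝ) :
    fiberDensity γ τ (2 * π * k) (partialFourier w k) t =
      ‖partialFourier (fun p => magneticDeriv (faceVectorPotential γ) w p (1, 0)) k t‖ ^ 2 +
      ‖partialFourier (fun p => magneticDeriv (faceVectorPotential γ) w p (0, 1)) k t‖ ^ 2 +
      ‖partialFourier (fun p => ((p.2 * Real.sin γ - τ : ℝ) : ℂ) * w p) k t‖ ^ 2 := by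
  have hw1 : ContDiff ℝ 1 w := hw.of_le (by simp)
  have htangential :
      partialFourier (fun p => magneticDeriv (faceVectorPotential γ) w p (1, 0)) k t =
        ((2 * π * k - t * Real.cos γ : ℝ) : ℂ) * partialFourier w k t := by
    simp only [magneticDeriv_apply, faceVectorPotential_apply, mul_one]
    rw [partialFourier_sub (f := fun p => -Complex.I * fderiv ℝ w p (1, 0))
      (g := fun p => ((Real.cos γ * p.2 : ℝ) : ℂ) * w p)
      (continuous_const.mul (contDiff_fderiv_apply hw _).continuous)
      (hc.fderiv_apply ℝ _).mul_left (by have := hw.continuous; fun_prop) hc.mul_left,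
      partialFourier_mul_left fun _ => -Complex.I,
      partialFourier_mul_left fun t => ((Real.cos γ * t : ℝ) : ℂ),
      partialFourier_fderiv_fst hw1 hc]
    push_cast
    linear_combination (-2 * π * k * partialFourier w k t) * Complex.I_mul_I
  have hnormal :
      partialFourier (fun p => magneticDeriv (faceVectorPotential γ) w p (0, 1)) k t =
        -Complex.I * deriv (partialFourier w k) t := by
    simp only [magneticDeriv_apply, faceVectorPotential_apply, mul_zero, Complex.ofReal_zero,
      zero_mul, sub_zero]
    rw [partialFourier_mul_left fun _ => -Complex.I, (hasDerivAt_partialFourier hw1 hc k t).deriv]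
  rw [htangential, hnormal, partialFourier_mul_left fun t => ((t * Real.sin γ - τ : ℝ) : ℂ)]
  simp only [fiberDensity, norm_mul, norm_neg, Complex.norm_I, Complex.norm_real, mul_pow,
    Real.norm_eq_abs, sq_abs]
  ring

lemma integrable_and_integral_fiberDensity_partialFourier (γ τ : ℝ) (hw : ContDiff ℝ ∞ w)
    (hc : HasCompactSupport w) :
    Integrable (fun q : ℝ × ℝ => fiberDensity γ τ (2 * π * q.1) (partialFourier w q.1) q.2)
        halfPlaneMeasure ∧
      ∫ q : ℝ × ℝ, fiberDensity γ τ (2 * π * q.1) (partialFourier w q.1) q.2 ∂halfPlaneMeasure =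
        ∫ p, energyDensity (faceVectorPotential γ) (faceElectricPotential γ τ) w p
          ∂halfPlaneMeasure := by
  have hD (e : ℝ × ℝ) := contDiff_magneticDeriv_apply (contDiff_faceVectorPotential γ) hw e
  have hDc (e : ℝ × ℝ) := hasCompactSupport_magneticDeriv_apply (faceVectorPotential γ) hc e
  have hV : ContDiff ℝ ∞ fun p : ℝ × ℝ => ((p.2 * Real.sin γ - τ : ℝ) : ℂ) * w p :=
    (contDiff_ofReal_comp (by fun_prop)).mul hw
  have hVc : HasCompactSupport fun p : ℝ × ℝ => ((p.2 * Real.sin γ - τ : ℝ) : ℂ) * w p :=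
    hc.mul_left
  have henergy (p : ℝ × ℝ) :
      energyDensity (faceVectorPotential γ) (faceElectricPotential γ τ) w p =
        ‖magneticDeriv (faceVectorPotential γ) w p (1, 0)‖ ^ 2 +
        ‖magneticDeriv (faceVectorPotential γ) w p (0, 1)‖ ^ 2 +
        ‖((p.2 * Real.sin γ - τ : ℝ) : ℂ) * w p‖ ^ 2 := by
    rw [energyDensity, faceElectricPotential, norm_mul, mul_pow, Complex.norm_real,
      Real.norm_eq_abs, sq_abs]
  have hF {f : ℝ × ℝ → ℂ} (hf : ContDiff ℝ ∞ f) (hfc : HasCompactSupport f) :=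
    integrable_norm_sq_partialFourier (ν := volume.restrict (Ioi 0)) hf hfc
  have hI {f : ℝ × ℝ → ℂ} (hf : ContDiff ℝ ∞ f) (hfc : HasCompactSupport f) :=
    integrable_norm_sq (μ := halfPlaneMeasure) hf.continuous hfc
  simp only [fiberDensity_partialFourier γ τ hw hc, henergy]
  refine ⟨((hF (hD _) (hDc _)).add (hF (hD _) (hDc _))).add (hF hV hVc), ?_⟩
  rw [integral_add_add (hF (hD _) (hDc _)) (hF (hD _) (hDc _)) (hF hV hVc),
    integral_add_add (hI (hD _) (hDc _)) (hI (hD _) (hDc _)) (hI hV hVc)]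
  simp only [integral_norm_sq_partialFourier (hD _) (hDc _),
    integral_norm_sq_partialFourier hV hVc]

theorem halfPlaneBottom_mul_integral_norm_sq_le (γ τ : ℝ) (hw : ContDiff ℝ ∞ w)
    (hc : HasCompactSupport w) :
    halfPlaneBottom γ τ * ∫ p, ‖w p‖ ^ 2 ∂halfPlaneMeasure ≤
      ∫ p, energyDensity (faceVectorPotential γ) (faceElectricPotential γ τ) w p
        ∂halfPlaneMeasure := by
  have hnorm := integrable_norm_sq_partialFourier (ν := volume.restrict (Ioi 0)) hw hc
  obtain ⟨hfiber, henergy⟩ := integrable_and_integral_fiberDensity_partialFourier γ τ hw hc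
  rw [← henergy, ← integral_norm_sq_partialFourier hw hc, ← integral_const_mul,
    integral_prod _ (hnorm.const_mul _), integral_prod _ hfiber]
  refine integral_mono (hnorm.const_mul _).integral_prod_left hfiber.integral_prod_left fun k => ?_
  simpa only [integral_const_mul] using halfPlaneBottom_mul_integral_le γ τ (2 * π * k)
    (contDiff_partialFourier hw hc k) (hasCompactSupport_partialFourier hc k)

end HalfPlane

/-! ### The lower bound -/

section LowerBound

lemma exists_slow_transition (a : ℝ) {η : ℝ} (hη : 0 < η) :
    ∃ (b : ℝ) (χ : ℝ → ℝ), ContDiff ℝ ∞ χ ∧ (∀ t ≤ a, χ t = 0) ∧ (∀ t, b ≤ t → χ t = 1) ∧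
      ∀ t, |deriv χ t| ≤ η := by
  have hconst {x c : ℝ} (h : ∀ᶠ y in 𝓝 x, Real.smoothTransition y = c) :
      deriv Real.smoothTransition x = 0 :=
    (EventuallyEq.deriv_eq h).trans (deriv_const x c)
  have hsupp : HasCompactSupport (deriv Real.smoothTransition) := by
    refine .intro (isCompact_Icc (a := (0 : ℝ)) (b := 1)) fun x hx => ?_
    rcases not_and_or.1 hx with hx | hx
    · exact hconst ((eventually_le_nhds (not_le.1 hx)).mono fun y =>
        Real.smoothTransition.zero_of_nonpos)
    · exact hconst ((eventually_ge_nhds (not_le.1 hx)).mono fun y =>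
        Real.smoothTransition.one_of_one_le)
  obtain ⟨C, hC⟩ := hsupp.exists_bound_of_continuous
    ((Real.smoothTransition.contDiff (n := 1)).continuous_deriv_one)
  have hC0 : 0 ≤ C := (norm_nonneg _).trans (hC 0)
  obtain ⟨L, hL, hCL⟩ : ∃ L : ℝ, 0 < L ∧ C ≤ η * L :=
    ⟨C / η + 1, by positivity, by rw [mul_add, mul_div_cancel₀ _ hη.ne']; linarith⟩
  refine ⟨a + L, fun t => Real.smoothTransition ((t - a) / L),
    Real.smoothTransition.contDiff.comp (by fun_prop), fun t ht => ?_, fun t ht => ?_, fun t => ?_⟩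
  · exact Real.smoothTransition.zero_of_nonpos
      (div_nonpos_of_nonpos_of_nonneg (sub_nonpos.2 ht) hL.le)
  · exact Real.smoothTransition.one_of_one_le ((one_le_div hL).2 (by linarith))
  · have hd := (((Real.smoothTransition.contDiff (n := 1)).differentiable one_ne_zero
      ((t - a) / L)).hasDerivAt).comp t (((hasDerivAt_id t).sub_const a).div_const L)
    rw [show deriv (fun t => Real.smoothTransition ((t - a) / L)) t = _ from hd.deriv, abs_mul,
      abs_of_pos (by positivity : 0 < 1 / L), mul_one_div, div_le_iff₀ hL]
    exact (hC _).trans hCL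

lemma energyDensity_cos_mul_add_le {A : ℝ × ℝ → ℝ × ℝ →L[ℝ] ℝ} {V : ℝ × ℝ → ℝ}
    {u : ℝ × ℝ → ℂ} {θ : ℝ × ℝ → ℝ} {x : ℝ × ℝ} {E ε : ℝ} (hθ : DifferentiableAt ℝ θ x)
    (hu : DifferentiableAt ℝ u x)
    (hslow : fderiv ℝ θ x (1, 0) ^ 2 + fderiv ℝ θ x (0, 1) ^ 2 ≤ ε)
    (hV : E ≤ V x ∨ θ x = 0) :
    energyDensity A V (fun y => Real.cos (θ y) * u y) x + E * ‖u x‖ ^ 2 ≤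
      energyDensity A V u x + ε * ‖u x‖ ^ 2 + E * ‖Real.cos (θ x) * u x‖ ^ 2 := by
  have hims := energyDensity_cos_add_energyDensity_sin (A := A) (V := V) hθ hu
  have herror := mul_le_mul_of_nonneg_right hslow (sq_nonneg ‖u x‖)
  have hn : ‖Real.cos (θ x) * u x‖ ^ 2 + ‖Real.sin (θ x) * u x‖ ^ 2 = ‖u x‖ ^ 2 := by
    simpa using norm_sq_add_norm_sq_reflection (θ x) (u x) 0
  have hsin : E * ‖Real.sin (θ x) * u x‖ ^ 2 ≤
      energyDensity A V (fun y => Real.sin (θ y) * u y) x := by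
    refine le_trans ?_ mul_norm_sq_le_energyDensity
    rcases hV with hV | hV
    · gcongr
    · simp [hV]
  linear_combination herror + hsin + -E * hn + hims

lemma exists_strip_radius {α : ℝ} (hα : α ∈ Ioo 0 π) {T : ℝ} (hT : 0 ≤ T) :
    ∃ R > (0 : ℝ), ∀ p ∈ discCompl R, 0 ≤ p.2 → p.2 ≤ T →
      (p ∈ faceSector α → 1 < p.1) ∧ (p ∉ faceSector α → p.1 < 0) := by
  have hsin : 0 < Real.sin α := Real.sin_pos_of_mem_Ioo hα
  set M := T / Real.sin α + 1
  have hM : T < M * Real.sin α := by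
    rw [add_mul, div_mul_cancel₀ _ hsin.ne']
    linarith
  have hM1 : 1 ≤ M := le_add_of_nonneg_left (by positivity)
  refine ⟨T + M, by positivity, fun p hp h0 h2 => ?_⟩
  have habs : M < |p.1| := by
    refine lt_of_pow_lt_pow_left₀ 2 (abs_nonneg _) ?_
    have : (T + M) ^ 2 < p.1 ^ 2 + p.2 ^ 2 := hp
    have : 0 ≤ T * M := by positivity
    rw [sq_abs]
    nlinarith
  have hcos : |p.2 * Real.cos α| ≤ T := by
    rw [abs_mul, abs_of_nonneg h0]
    exact (mul_le_of_le_one_right h0 (Real.abs_cos_le_one α)).trans h2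
  obtain ⟨hcos₁, hcos₂⟩ := abs_le.1 hcos
  rcases lt_abs.1 habs with hpos | hneg
  · refine ⟨fun _ => hM1.trans_lt hpos, fun hD => (hD ⟨h0, ?_⟩).elim⟩
    linarith [mul_lt_mul_of_pos_right hpos hsin]
  · refine ⟨fun hD => ?_, fun _ => by linarith⟩
    linarith [mul_lt_mul_of_pos_right hneg hsin, hD.2]

lemma setIntegral_faceSector_eq {α : ℝ} {f : ℝ × ℝ → ℝ}
    (hf : ∀ p : ℝ × ℝ, 0 ≤ p.2 → p ∉ faceSector α → f p = 0) :
    ∫ p in faceSector α, f p = ∫ p, f p ∂halfPlaneMeasure := by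
  rw [halfPlaneMeasure_eq_restrict]
  exact (setIntegral_eq_of_subset_of_forall_sdiff_eq_zero
    (measurableSet_le measurable_const measurable_snd) (fun p hp => hp.1)
    fun p hp => hf p hp.1 hp.2).symm

/-- Near the half-plane, the cut-off of `w` to the component of its support that meets the sector
is locally equal to `w` or to `0`. -/
lemma halfPlaneBottom_mul_setIntegral_le_of_tsupport {α : ℝ} (γ τ : ℝ) {w : ℝ × ℝ → ℂ}
    (hw : ContDiff ℝ ∞ w) (hc : HasCompactSupport w)
    (hin : ∀ p ∈ tsupport w, p ∈ faceSector α → 1 < p.1)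
    (hout : ∀ p ∈ tsupport w, 0 ≤ p.2 → p ∉ faceSector α → p.1 < 0) :
    halfPlaneBottom γ τ * ∫ p in faceSector α, ‖w p‖ ^ 2 ≤
      ∫ p in faceSector α, energyDensity (faceVectorPotential γ) (faceElectricPotential γ τ) w p :=
    by
  set v : ℝ × ℝ → ℂ := fun p => Real.smoothTransition p.1 * w p with hv
  have hvsmooth : ContDiff ℝ ∞ v :=
    (contDiff_ofReal_comp (Real.smoothTransition.contDiff.comp contDiff_fst)).mul hw
  have hvc : HasCompactSupport v := hc.mul_left
  have heq : ∀ p ∈ faceSector α, v =ᶠ[𝓝 p] w := by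
    intro p hp
    by_cases hpw : p ∈ tsupport w
    · filter_upwards [continuousAt_fst.eventually (lt_mem_nhds (hin p hpw hp))] with q hq
      simp [hv, Real.smoothTransition.one_of_one_le (le_of_lt hq)]
    · filter_upwards [notMem_tsupport_iff_eventuallyEq.1 hpw] with q hq
      simp [hv, hq]
  have hzero : ∀ p : ℝ × ℝ, 0 ≤ p.2 → p ∉ faceSector α → v =ᶠ[𝓝 p] 0 := by
    intro p h0 hp
    by_cases hpw : p ∈ tsupport w
    · filter_upwards [continuousAt_fst.eventually (gt_mem_nhds (hout p hpw h0 hp))] with q hq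
      simp [hv, Real.smoothTransition.zero_of_nonpos (le_of_lt hq)]
    · filter_upwards [notMem_tsupport_iff_eventuallyEq.1 hpw] with q hq
      simp [hv, hq]
  have hmeas := measurableSet_faceSector α
  rw [← setIntegral_congr_fun hmeas fun p hp => congrArg (‖·‖ ^ 2) (heq p hp).eq_of_nhds,
    ← setIntegral_congr_fun hmeas fun p hp => energyDensity_congr (heq p hp),
    setIntegral_faceSector_eq fun p h0 hp => energyDensity_eq_zero (hzero p h0 hp),
    setIntegral_faceSector_eq fun p h0 hp => by simp [(hzero p h0 hp).eq_of_nhds]]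
  exact halfPlaneBottom_mul_integral_norm_sq_le γ τ hvsmooth hvc

lemma exists_le_faceElectricPotential {γ : ℝ} (hγ : Real.sin γ ≠ 0) (τ E : ℝ) :
    ∃ a, ∀ p : ℝ × ℝ, a ≤ p.2 → E ≤ faceElectricPotential γ τ p := by
  have h : Tendsto (fun t : ℝ => (t * Real.sin γ - τ) ^ 2) atTop atTop := by
    have hlin : Tendsto (fun t : ℝ => |Real.sin γ * t - τ|) atTop atTop := by
      refine tendsto_atTop_mono (fun t => abs_sub_abs_le_abs_sub _ _) ?_
      simp only [abs_mul]
      exact tendsto_atTop_add_const_right _ _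
        (tendsto_abs_atTop_atTop.const_mul_atTop (abs_pos.2 hγ))
    simpa only [Function.comp_def, sq_abs, mul_comm] using
      (tendsto_pow_atTop two_ne_zero).comp hlin
  obtain ⟨a, ha⟩ := eventually_atTop.1 (h.eventually_ge_atTop E)
  exact ⟨a, fun p hp => ha p.2 hp⟩

lemma setIntegral_energyDensity_cos_mul_add_le {A : ℝ × ℝ → ℝ × ℝ →L[ℝ] ℝ} {V : ℝ × ℝ → ℝ}
    {u : ℝ × ℝ → ℂ} {θ : ℝ × ℝ → ℝ} {E ε : ℝ} (hA : Continuous A) (hV : Continuous V)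
    (hθ : ContDiff ℝ 1 θ) (hu : ContDiff ℝ 1 u) (hc : HasCompactSupport u)
    (hslow : ∀ x, fderiv ℝ θ x (1, 0) ^ 2 + fderiv ℝ θ x (0, 1) ^ 2 ≤ ε)
    (hVE : ∀ x, E ≤ V x ∨ θ x = 0) (Ω : Set (ℝ × ℝ)) :
    (∫ x in Ω, energyDensity A V (fun y => Real.cos (θ y) * u y) x) +
        E * ∫ x in Ω, ‖u x‖ ^ 2 ≤
      (∫ x in Ω, energyDensity A V u x) + ε * (∫ x in Ω, ‖u x‖ ^ 2) +
        E * ∫ x in Ω, ‖Real.cos (θ x) * u x‖ ^ 2 := by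
  have hw : ContDiff ℝ 1 fun y => Real.cos (θ y) * u y := (contDiff_ofReal_comp hθ.cos).mul hu
  have hwc : HasCompactSupport fun y => Real.cos (θ y) * u y := hc.mul_left
  have hdu := integrable_energyDensity (μ := volume.restrict Ω) hA hV hu hc
  have hdw := integrable_energyDensity (μ := volume.restrict Ω) hA hV hw hwc
  have hnu := integrable_norm_sq (μ := volume.restrict Ω) hu.continuous hc
  have hnw := integrable_norm_sq (μ := volume.restrict Ω) hw.continuous hwc
  simp only [← integral_const_mul]
  rw [← integral_add hdw (hnu.const_mul E), ← integral_add_add hdu (hnu.const_mul ε)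
    (hnw.const_mul E)]
  exact integral_mono (hdw.add (hnu.const_mul E)) ((hdu.add (hnu.const_mul ε)).add
    (hnw.const_mul E)) fun x => energyDensity_cos_mul_add_le
    (hθ.differentiable one_ne_zero x) (hu.differentiable one_ne_zero x) (hslow x) (hVE x)

lemma exists_slow_normal_angle (a : ℝ) {ε : ℝ} (hε : 0 < ε) :
    ∃ (b : ℝ) (θ : ℝ × ℝ → ℝ), ContDiff ℝ ∞ θ ∧ (∀ p, p.2 ≤ a → θ p = 0) ∧
      (∀ p, b ≤ p.2 → θ p = π / 2) ∧
      ∀ p, fderiv ℝ θ p (1, 0) ^ 2 + fderiv ℝ θ p (0, 1) ^ 2 ≤ ε := by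
  obtain ⟨b, χ, hχ, hχ0, hχ1, hχd⟩ :=
    exists_slow_transition a (by positivity : 0 < √ε / (π / 2))
  refine ⟨b, fun p => π / 2 * χ p.2, contDiff_const.mul (hχ.comp contDiff_snd),
    fun p hp => by simp only [hχ0 _ hp, mul_zero], fun p hp => by simp only [hχ1 _ hp, mul_one],
    fun p => ?_⟩
  have hd : HasFDerivAt (fun p : ℝ × ℝ => π / 2 * χ p.2)
      ((π / 2) • deriv χ p.2 • ContinuousLinearMap.snd ℝ ℝ ℝ) p :=
    ((hχ.differentiable (by simp) p.2).hasDerivAt.comp_hasFDerivAt p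
      (hasFDerivAt_snd : HasFDerivAt Prod.snd (ContinuousLinearMap.snd ℝ ℝ ℝ) p)).const_mul (π / 2)
  have hbound : |π / 2 * deriv χ p.2| ≤ √ε := by
    rw [abs_mul, abs_of_pos Real.pi_div_two_pos, mul_comm, ← le_div_iff₀ Real.pi_div_two_pos]
    exact hχd p.2
  have := pow_le_pow_left₀ (abs_nonneg _) hbound 2
  rw [sq_abs, Real.sq_sqrt hε.le] at this
  simpa [hd.fderiv] using this

lemma exists_radius_mul_setIntegral_le {α γ : ℝ} (hα : α ∈ Ioo 0 π) (hγ : Real.sin γ ≠ 0) (τ : ℝ)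
    {ε : ℝ} (hε : 0 < ε) :
    ∃ R > (0 : ℝ), ∀ u : ℝ × ℝ → ℂ, ContDiff ℝ ∞ u → HasCompactSupport u →
      tsupport u ⊆ discCompl R →
      (halfPlaneBottom γ τ - ε) * ∫ p in faceSector α, ‖u p‖ ^ 2 ≤
        ∫ p in faceSector α,
          energyDensity (faceVectorPotential γ) (faceElectricPotential γ τ) u p := by
  obtain ⟨a, ha⟩ := exists_le_faceElectricPotential hγ τ (halfPlaneBottom γ τ)
  obtain ⟨b, θ, hθ, hθ0, hθ1, hslow⟩ := exists_slow_normal_angle a hε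
  obtain ⟨R, hR, hgeom⟩ := exists_strip_radius hα (le_max_right b 0)
  refine ⟨R, hR, fun u hu hc huR => ?_⟩
  set w : ℝ × ℝ → ℂ := fun p => Real.cos (θ p) * u p with hwdef
  have hw : ContDiff ℝ ∞ w := (contDiff_ofReal_comp hθ.cos).mul hu
  have hwstrip : tsupport w ⊆ {p | p.2 ≤ max b 0} := by
    refine closure_minimal (fun p hp => ?_) (isClosed_le continuous_snd continuous_const)
    by_contra h
    exact hp (by simp [hwdef, hθ1 p ((le_max_left b 0).trans (not_le.1 h).le)])
  have hwR : tsupport w ⊆ discCompl R := tsupport_mul_subset_right.trans huR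
  have hnear := halfPlaneBottom_mul_setIntegral_le_of_tsupport (α := α) γ τ hw hc.mul_left
    (fun p hp hD => (hgeom p (hwR hp) hD.1 (hwstrip hp)).1 hD)
    (fun p hp h0 hD => (hgeom p (hwR hp) h0 (hwstrip hp)).2 hD)
  have hims := setIntegral_energyDensity_cos_mul_add_le (continuous_faceVectorPotential γ)
    (continuous_faceElectricPotential γ τ) (hθ.of_le (by simp)) (hu.of_le (by simp)) hc hslow
    (fun p => (le_total a p.2).imp (ha p) (hθ0 p)) (faceSector α)
  linarith

end LowerBound

/-! ### The upper bound -/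

section UpperBound

lemma exists_contDiff_hasCompactSupport_integral_Ioi_pos :
    ∃ g : ℝ → ℂ, ContDiff ℝ ∞ g ∧ HasCompactSupport g ∧ 0 < ∫ t in Ioi (0 : ℝ), ‖g t‖ ^ 2 := by
  let f : ContDiffBump (0 : ℝ) := ⟨1, 2, one_pos, one_lt_two⟩
  have hg : ContDiff ℝ ∞ fun t => (f t : ℂ) := contDiff_ofReal_comp f.contDiff
  have hc : HasCompactSupport fun t => (f t : ℂ) :=
    f.hasCompactSupport.comp_left Complex.ofReal_zero
  refine ⟨_, hg, hc, ?_⟩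
  rw [setIntegral_pos_iff_support_of_nonneg_ae (Eventually.of_forall fun t => by positivity)
    (integrable_norm_sq hg.continuous hc)]
  have hsub : Ioo (0 : ℝ) 2 ⊆ (Function.support fun t => ‖(f t : ℂ)‖ ^ 2) ∩ Ioi 0 := by
    refine fun t ht => ⟨?_, ht.1⟩
    have : t ∈ Function.support f := by
      rw [f.support_eq, Metric.mem_ball, Real.dist_0_eq_abs, abs_of_pos ht.1]
      exact ht.2
    simpa using this
  exact lt_of_lt_of_le (by simp) (measure_mono hsub)

lemma exists_lt_deGennes_add (ξ : ℝ) {ε : ℝ} (hε : 0 < ε) :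
    ∃ g : ℝ → ℂ, ContDiff ℝ ∞ g ∧ HasCompactSupport g ∧ (0 < ∫ t in Ioi (0 : ℝ), ‖g t‖ ^ 2) ∧
      ∫ t in Ioi (0 : ℝ), ‖deriv g t‖ ^ 2 + (t - ξ) ^ 2 * ‖g t‖ ^ 2 <
        (deGennes ξ + ε) * ∫ t in Ioi (0 : ℝ), ‖g t‖ ^ 2 := by
  obtain ⟨g₀, hg₀, hc₀, hpos₀⟩ := exists_contDiff_hasCompactSupport_integral_Ioi_pos
  obtain ⟨_, ⟨g, hg, hc, hpos, rfl⟩, hlt⟩ :=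
    exists_lt_of_csInf_lt (by exact ⟨_, g₀, hg₀, hc₀, hpos₀, rfl⟩)
      (lt_add_of_pos_right (deGennes ξ) hε)
  exact ⟨g, hg, hc, hpos, (div_lt_iff₀ hpos).1 hlt⟩

lemma exists_integral_fiberDensity_lt (γ τ : ℝ) {ε : ℝ} (hε : 0 < ε) :
    ∃ (ξ : ℝ) (g : ℝ → ℂ), ContDiff ℝ ∞ g ∧ HasCompactSupport g ∧
      (0 < ∫ t in Ioi (0 : ℝ), ‖g t‖ ^ 2) ∧
      ∫ t in Ioi (0 : ℝ), fiberDensity γ τ ξ g t <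
        (halfPlaneBottom γ τ + ε) * ∫ t in Ioi (0 : ℝ), ‖g t‖ ^ 2 := by
  obtain ⟨ξ, hξ⟩ := exists_lt_of_ciInf_lt
    (lt_add_of_pos_right (halfPlaneBottom γ τ) (half_pos hε))
  obtain ⟨g, hg, hc, hpos, hlt⟩ :=
    exists_lt_deGennes_add (ξ * Real.cos γ + τ * Real.sin γ) (half_pos hε)
  refine ⟨ξ, g, hg, hc, hpos, ?_⟩
  rw [integral_fiberDensity γ τ ξ (hg.of_le (by simp)) hc]
  linarith [mul_lt_mul_of_pos_right hξ hpos]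

/-- Dilating a bump by `δ` multiplies the ratio `∫ ψ'² / ∫ ψ²` by `δ²`. -/
lemma exists_slow_bump (S : ℝ) {ε : ℝ} (hε : 0 < ε) :
    ∃ ψ : ℝ → ℝ, ContDiff ℝ ∞ ψ ∧ HasCompactSupport ψ ∧ tsupport ψ ⊆ Ici S ∧
      (0 < ∫ s, ψ s ^ 2) ∧ ∫ s, deriv ψ s ^ 2 < ε * ∫ s, ψ s ^ 2 := by
  let f : ContDiffBump (0 : ℝ) := ⟨1, 2, one_pos, one_lt_two⟩
  have hf : ContDiff ℝ ∞ f := f.contDiff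
  have hpos : 0 < ∫ s, f s ^ 2 :=
    (hf.continuous.pow 2).integral_pos_of_hasCompactSupport_nonneg_nonzero
      (f.hasCompactSupport.comp_left (g := fun x : ℝ => x ^ 2) (by simp)) (fun s => sq_nonneg _)
      (x := 0) (by simp [f.one_of_mem_closedBall (Metric.mem_closedBall_self f.rIn_pos.le)])
  obtain ⟨δ, hlt, hδ⟩ : ∃ δ : ℝ, δ ^ 2 * ∫ s, deriv f s ^ 2 < ε * ∫ s, f s ^ 2 ∧ 0 < δ := by
    have h : Continuous fun δ : ℝ => δ ^ 2 * ∫ s, deriv f s ^ 2 := by fun_prop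
    have hev : ∀ᶠ δ : ℝ in 𝓝 0, δ ^ 2 * ∫ s, deriv f s ^ 2 < ε * ∫ s, f s ^ 2 :=
      h.continuousAt.eventually_lt continuousAt_const (by simpa using mul_pos hε hpos)
    exact ((hev.filter_mono nhdsWithin_le_nhds).and (self_mem_nhdsWithin (s := Ioi 0))).exists
  set c := S + 2 / δ
  have hscale (g : ℝ → ℝ) : ∫ s, g (δ * (s - c)) = δ⁻¹ * ∫ s, g s := by
    rw [integral_sub_right_eq_self (fun s => g (δ * s)) c, Measure.integral_comp_mul_left,
      abs_of_pos (inv_pos.2 hδ), smul_eq_mul]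
  have hderiv (s : ℝ) : deriv (fun s => f (δ * (s - c))) s = deriv f (δ * (s - c)) * δ := by
    have h := ((hasDerivAt_id s).sub_const c).const_mul δ
    rw [mul_one] at h
    exact ((hf.differentiable (by simp) _).hasDerivAt.comp s h).deriv
  refine ⟨fun s => f (δ * (s - c)), hf.comp (by fun_prop), f.hasCompactSupport.comp_homeomorph
    ((Homeomorph.subRight c).trans (Homeomorph.mulLeft₀ δ hδ.ne')), ?_, ?_, ?_⟩
  · refine closure_minimal (fun s hs => ?_) isClosed_Ici
    have hs' : δ * (s - c) ∈ Function.support f := hs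
    rw [f.support_eq, Metric.mem_ball, Real.dist_0_eq_abs] at hs'
    have hδs : δ * (c - s) < δ * (2 / δ) := by
      rw [mul_div_cancel₀ _ hδ.ne']
      linarith [(abs_lt.1 hs').1, show f.rOut = 2 from rfl]
    rw [mem_Ici]
    linarith [lt_of_mul_lt_mul_left hδs hδ.le]
  · rw [hscale fun s => f s ^ 2]
    positivity
  · simp only [hderiv, mul_pow]
    rw [hscale fun s => deriv f s ^ 2 * δ ^ 2, hscale fun s => f s ^ 2, integral_mul_const,
      mul_left_comm ε, mul_comm _ (δ ^ 2)]
    exact mul_lt_mul_of_pos_left hlt (inv_pos.2 hδ)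

lemma exists_far_strip_subset {α : ℝ} (hα : α ∈ Ioo 0 π) (M R : ℝ) :
    ∃ S, ∀ p : ℝ × ℝ, S ≤ p.1 → |p.2| ≤ M →
      p ∈ discCompl R ∧ (0 ≤ p.2 → p ∈ faceSector α) := by
  have hsin : 0 < Real.sin α := Real.sin_pos_of_mem_Ioo hα
  refine ⟨max (|R| + 1) (M / Real.sin α), fun p hS hM => ?_⟩
  obtain ⟨hR, hMS⟩ := max_le_iff.1 hS
  refine ⟨?_, fun h0 => ⟨h0, ?_⟩⟩
  · have hsq : R ^ 2 < p.1 ^ 2 := sq_lt_sq.2 (by linarith [le_abs_self p.1])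
    exact hsq.trans_le (le_add_of_nonneg_right (sq_nonneg _))
  · have hM' : p.2 ≤ p.1 * Real.sin α :=
      ((le_abs_self _).trans hM).trans ((div_le_iff₀ hsin).1 hMS)
    linarith [mul_le_of_le_one_right h0 (Real.cos_le_one α)]

variable {ψ : ℝ → ℝ} {g : ℝ → ℂ}

lemma tsupport_mul_subset_prod (ψ : ℝ → ℝ) (g : ℝ → ℂ) :
    (tsupport fun p : ℝ × ℝ => (ψ p.1 : ℂ) * g p.2) ⊆ tsupport ψ ×ˢ tsupport g := by
  refine closure_minimal (fun p hp => ?_) ((isClosed_tsupport ψ).prod (isClosed_tsupport g))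
  obtain ⟨hψ, hg⟩ := mul_ne_zero_iff.1 hp
  exact ⟨subset_tsupport _ (Complex.ofReal_ne_zero.1 hψ), subset_tsupport _ hg⟩

lemma energyDensity_mul (a V : ℝ → ℝ) (hψ : Differentiable ℝ ψ) (hg : Differentiable ℝ g)
    (p : ℝ × ℝ) :
    energyDensity (fun p => a p.2 • ContinuousLinearMap.fst ℝ ℝ ℝ) (fun p => V p.2)
        (fun p => ψ p.1 * g p.2) p =
      ψ p.1 ^ 2 * (‖deriv g p.2‖ ^ 2 + (a p.2 ^ 2 + V p.2) * ‖g p.2‖ ^ 2) +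
        deriv ψ p.1 ^ 2 * ‖g p.2‖ ^ 2 := by
  obtain ⟨s, t⟩ := p
  have hu : Differentiable ℝ fun p : ℝ × ℝ => (ψ p.1 : ℂ) * g p.2 :=
    (Complex.ofRealCLM.differentiable.comp (hψ.comp differentiable_fst)).mul
      (hg.comp differentiable_snd)
  have hfst := (hasDerivAt_slice_fst hu s t).unique ((hψ s).hasDerivAt.ofReal_comp.mul_const (g t))
  have hsnd := (hasDerivAt_slice_snd hu s t).unique ((hg t).hasDerivAt.const_mul (ψ s : ℂ))
  have htangent : -Complex.I * (deriv ψ s * g t) - (a t : ℂ) * (ψ s * g t) =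
      ((-(a t * ψ s) : ℝ) + (-deriv ψ s : ℝ) * Complex.I) * g t := by
    push_cast
    ring
  simp only [energyDensity, magneticDeriv_apply, hfst, hsnd, smul_apply,
    ContinuousLinearMap.coe_fst', smul_eq_mul, mul_one, mul_zero, Complex.ofReal_zero, zero_mul,
    sub_zero, htangent, norm_mul, norm_neg, Complex.norm_I, one_mul, mul_pow, Complex.norm_real,
    Real.norm_eq_abs, sq_abs, ← Complex.normSq_eq_norm_sq (_ + _), Complex.normSq_add_mul_I]
  ring

lemma setIntegral_energyDensity_mul {α : ℝ} (γ τ ξ : ℝ) (hψ : ContDiff ℝ 1 ψ)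
    (hψc : HasCompactSupport ψ) (hg : ContDiff ℝ 1 g) (hgc : HasCompactSupport g)
    (hsupp : ∀ p ∈ tsupport ψ ×ˢ tsupport g, 0 ≤ p.2 → p ∈ faceSector α) :
    ∫ p in faceSector α, energyDensity
        (fun p => (Real.cos γ * p.2 - ξ) • ContinuousLinearMap.fst ℝ ℝ ℝ)
        (faceElectricPotential γ τ) (fun p => ψ p.1 * g p.2) p =
      (∫ s, ψ s ^ 2) * (∫ t in Ioi (0 : ℝ), fiberDensity γ τ ξ g t) +
        (∫ s, deriv ψ s ^ 2) * ∫ t in Ioi (0 : ℝ), ‖g t‖ ^ 2 := by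
  have hdens (p : ℝ × ℝ) : energyDensity
      (fun p => (Real.cos γ * p.2 - ξ) • ContinuousLinearMap.fst ℝ ℝ ℝ)
      (faceElectricPotential γ τ) (fun p => ψ p.1 * g p.2) p =
      ψ p.1 ^ 2 * fiberDensity γ τ ξ g p.2 + deriv ψ p.1 ^ 2 * ‖g p.2‖ ^ 2 := by
    have h := energyDensity_mul (fun t => Real.cos γ * t - ξ) (fun t => (t * Real.sin γ - τ) ^ 2)
      (hψ.differentiable one_ne_zero) (hg.differentiable one_ne_zero) p
    rw [mul_comm (Real.cos γ), ← neg_sub, neg_sq] at h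
    exact h
  have hψi : Integrable fun s => ψ s ^ 2 := by
    simpa using integrable_norm_sq (μ := volume) hψ.continuous hψc
  have hψi' : Integrable fun s => deriv ψ s ^ 2 := by
    simpa using integrable_norm_sq (μ := volume) (hψ.continuous_deriv le_rfl) hψc.deriv
  have hgi := integrable_norm_sq (μ := volume.restrict (Ioi 0)) hg.continuous hgc
  have hfi : Integrable (fiberDensity γ τ ξ g) (volume.restrict (Ioi 0)) :=
    integrable_deriv_sq_add_mul_sq (by fun_prop) hg hgc
  rw [setIntegral_faceSector_eq fun p h0 hp => energyDensity_eq_zero_of_notMem_tsupport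
    fun h => hp (hsupp p (tsupport_mul_subset_prod ψ g h) h0)]
  simp only [hdens]
  rw [integral_add (hψi.mul_prod hfi) (hψi'.mul_prod hgi),
    integral_prod_mul (fun s => ψ s ^ 2) (fiberDensity γ τ ξ g),
    integral_prod_mul (fun s => deriv ψ s ^ 2) fun t => ‖g t‖ ^ 2]

lemma setIntegral_norm_sq_mul {α : ℝ}
    (hsupp : ∀ p ∈ tsupport ψ ×ˢ tsupport g, 0 ≤ p.2 → p ∈ faceSector α) :
    ∫ p in faceSector α, ‖ψ p.1 * g p.2‖ ^ 2 =
      (∫ s, ψ s ^ 2) * ∫ t in Ioi (0 : ℝ), ‖g t‖ ^ 2 := by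
  rw [setIntegral_faceSector_eq fun p h0 hp => ?_]
  · simp only [norm_mul, mul_pow, Complex.norm_real, Real.norm_eq_abs, sq_abs]
    exact integral_prod_mul (fun s => ψ s ^ 2) fun t => ‖g t‖ ^ 2
  · have := image_eq_zero_of_notMem_tsupport
      fun h => hp (hsupp p (tsupport_mul_subset_prod ψ g h) h0)
    simp [this]

lemma exists_mem_rayleighQuotients_le {α : ℝ} (hα : α ∈ Ioo 0 π) (γ τ R : ℝ) {ε : ℝ}
    (hε : 0 < ε) :
    ∃ r ∈ rayleighQuotients (faceVectorPotential γ) (faceElectricPotential γ τ) (faceSector α)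
      (discCompl R), r ≤ halfPlaneBottom γ τ + ε := by
  obtain ⟨ξ, g, hg, hgc, hgpos, hglt⟩ := exists_integral_fiberDensity_lt γ τ (half_pos hε)
  obtain ⟨M, hM⟩ := hgc.isCompact.isBounded.exists_norm_le
  obtain ⟨S, hS⟩ := exists_far_strip_subset hα M R
  obtain ⟨ψ, hψ, hψc, hψS, hψpos, hψlt⟩ := exists_slow_bump S (half_pos hε)
  have hfar : ∀ p ∈ tsupport ψ ×ˢ tsupport g, p ∈ discCompl R ∧ (0 ≤ p.2 → p ∈ faceSector α) :=
    fun p hp => hS p (hψS hp.1) (hM _ hp.2)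
  have hsupp := tsupport_mul_subset_prod ψ g
  have hgauge : (fun p : ℝ × ℝ => (Real.cos γ * p.2 - ξ) • ContinuousLinearMap.fst ℝ ℝ ℝ) +
      fderiv ℝ (fun p : ℝ × ℝ => ξ * p.1) = faceVectorPotential γ := by
    ext1 p
    have h : HasFDerivAt (fun p : ℝ × ℝ => ξ * p.1) (ξ • ContinuousLinearMap.fst ℝ ℝ ℝ) p :=
      hasFDerivAt_fst.const_mul ξ
    rw [Pi.add_apply, h.fderiv, ← add_smul, sub_add_cancel, faceVectorPotential]
  have hnorm := setIntegral_norm_sq_mul fun p hp => (hfar p hp).2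
  have hpos := mul_pos hψpos hgpos
  rw [← hgauge, rayleighQuotients_gauge (by fun_prop)]
  refine ⟨_, ⟨fun p => ψ p.1 * g p.2,
    (contDiff_ofReal_comp (hψ.comp contDiff_fst)).mul (hg.comp contDiff_snd),
    (hψc.isCompact.prod hgc.isCompact).of_isClosed_subset (isClosed_tsupport _) hsupp,
    fun p hp => (hfar p (hsupp hp)).1, hnorm ▸ hpos, rfl⟩, ?_⟩
  rw [hnorm, setIntegral_energyDensity_mul γ τ ξ (hψ.of_le (by simp)) hψc (hg.of_le (by simp)) hgc
    fun p hp => (hfar p hp).2, div_le_iff₀ hpos]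
  linarith [mul_lt_mul_of_pos_left hglt hψpos, mul_lt_mul_of_pos_right hψlt hgpos]

end UpperBound

/-! ### Persson's formula -/

section Persson

variable {α γ : ℝ}

lemma SigmaR_le_halfPlaneBottom (hα : α ∈ Ioo 0 π) (γ τ R : ℝ) :
    SigmaR α (Real.sin γ * Real.cos (α / 2)) (Real.sin γ * Real.sin (α / 2)) (Real.cos γ) τ R ≤
      halfPlaneBottom γ τ := by
  rw [SigmaR_eq_sInf_face ⟨by linarith [hα.1, hα.2], hα.2⟩]
  refine le_of_forall_pos_le_add fun ε hε => ?_
  obtain ⟨r, hr, hle⟩ := exists_mem_rayleighQuotients_le hα γ τ R hε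
  exact (csInf_le ⟨0, fun _ => nonneg_of_mem_rayleighQuotients
    (faceElectricPotential_nonneg γ τ)⟩ hr).trans hle

lemma exists_radius_halfPlaneBottom_sub_le_SigmaR (hα : α ∈ Ioo 0 π) (hγ : Real.sin γ ≠ 0)
    (τ : ℝ) {ε : ℝ} (hε : 0 < ε) :
    ∃ R > (0 : ℝ), halfPlaneBottom γ τ - ε ≤
      SigmaR α (Real.sin γ * Real.cos (α / 2)) (Real.sin γ * Real.sin (α / 2)) (Real.cos γ) τ
        R := by
  obtain ⟨R, hR, hlower⟩ := exists_radius_mul_setIntegral_le hα hγ τ hε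
  obtain ⟨r, hr, -⟩ := exists_mem_rayleighQuotients_le hα γ τ R hε
  refine ⟨R, hR, ?_⟩
  rw [SigmaR_eq_sInf_face ⟨by linarith [hα.1, hα.2], hα.2⟩]
  refine le_csInf ⟨r, hr⟩ ?_
  rintro _ ⟨u, hu, hc, hsupp, hpos, rfl⟩
  exact (le_div_iff₀ hpos).2 (hlower u hu hc hsupp)

end Persson

end MagWedge

open MagWedge in
theorem sEss_eq_general {α γ : ℝ} (hα : α ∈ Ioo 0 π) (hγ : Real.sin γ ≠ 0) (τ : ℝ) :
    sEss α (Real.sin γ * Real.cos (α / 2)) (Real.sin γ * Real.sin (α / 2)) (Real.cos γ) τ =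
      ⨅ ξ : ℝ, (deGennes (ξ * Real.cos γ + τ * Real.sin γ) +
        (ξ * Real.sin γ - τ * Real.cos γ) ^ 2) := by
  have hle : ∀ r ∈ {r : ℝ | ∃ R > (0 : ℝ), r = SigmaR α (Real.sin γ * Real.cos (α / 2))
      (Real.sin γ * Real.sin (α / 2)) (Real.cos γ) τ R}, r ≤ halfPlaneBottom γ τ := by
    rintro _ ⟨R, -, rfl⟩
    exact SigmaR_le_halfPlaneBottom hα γ τ R
  refine le_antisymm (csSup_le ⟨_, 1, one_pos, rfl⟩ hle)
    (le_of_forall_pos_le_add fun ε hε => ?_)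
  obtain ⟨R, hR, hlower⟩ := exists_radius_halfPlaneBottom_sub_le_SigmaR hα hγ τ hε
  exact sub_le_iff_le_add.1 (hlower.trans (le_csSup ⟨_, hle⟩ ⟨R, hR, rfl⟩))

open MagWedge in
/-- the bottom of the essential spectrum on the sector. -/
theorem sEss_eq (α γ τ : ℝ) (hα : α ∈ Set.Ioo 0 π) (hγ : γ ∈ Set.Ioc 0 (π / 2)) :
    sEss α (Real.sin γ * Real.cos (α / 2)) (Real.sin γ * Real.sin (α / 2)) (Real.cos γ) τ
      = ⨅ ξ : ℝ, (deGennes (ξ * Real.cos γ + τ * Real.sin γ)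
          + (ξ * Real.sin γ - τ * Real.cos γ) ^ 2) := by
  exact sEss_eq_general hα (Real.sin_pos_of_pos_of_lt_pi hγ.1 (by linarith [hγ.2, hγ.1])).ne' τ
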